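/- arXiv:2512.14342 — 4 statements merged into one kernel-verified Lean document; each statement's English description precedes it below -/
import Mathlib

section
/- (Mass Transference Principle under full measure; dimension form.) In the product Ahlfors-regular setting described in the context, let (B_{i,n}) be balls in Y_i with radii r(B_{i,n}) = r_n^{v_{i,n}}, where r_n → 0 and v_{i,n} → v_i ∈ ℝ⁺∪{+∞}, and let u_{i,n} ≤ v_{i,n} with u_{i,n} → u_i ∈ ℝ⁺; set s_{i,n} := u_{i,n}δ_i/v_{i,n}. Let (f_n : Y → X) be a sequence of ε₀-local isometries with a common constant ε₀ > 0 satisfying condition (H): there is a sequence (c_n) ⊆ [1,∞) with (log c_n)/(−log r_n) → 0 and an ε₀-local isometry f : Y → X such that for every n and every rectangle R = Π_{i=1}^d B(x_i,r_i) ⊆ Y of diameter < ε₀ there exist points y_{R,i,n} ∈ Y_i with f(Π_i B(y_{R,i,n}, c_n^{-1} r_i)) ⊆ f_n(R) ⊆ f(Π_i B(y_{R,i,n}, c_n r_i)). Assume the full measure condition μ( limsup_n f_n(Π_{i=1}^d B_{i,n}^{s_{i,n}}) ) = μ(X). Then dim_H ( limsup_n f_n(Π_{i=1}^d B_{i,n})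 ) ≥ s(u,v). -/
open Filter MeasureTheory Set
open scoped ENNReal NNReal

noncomputable section

variable {d : ℕ}

/-- The `ℓ²` distance on a finite product of metric spaces. -/
def dist2 {E : Fin d → Type*} [∀ i, MetricSpace (E i)] (x y : ∀ i, E i) : ℝ :=
  Real.sqrt (∑ i, dist (x i) (y i) ^ 2)

/-- The open ball for the `ℓ²` distance on a finite product of metric spaces. -/
def ball2 {E : Fin d → Type*} [∀ i, MetricSpace (E i)] (c : ∀ i, E i) (r : ℝ) :
    Set (∀ i, E i) :=
  {x | dist2 x c < r}

/-- `f : Y → X` is an `ε₀`-local isometry: around every point it maps the `ε₀`-ball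
bijectively onto the `ε₀`-ball around the image, preserving the (product `ℓ²`) distance. -/
def IsLocalIsometry {Y X : Fin d → Type*} [∀ i, MetricSpace (Y i)] [∀ i, MetricSpace (X i)]
    (f : (∀ i, Y i) → (∀ i, X i)) (ε₀ : ℝ) : Prop :=
  ∀ y : ∀ i, Y i, Set.BijOn f (ball2 y ε₀) (ball2 (f y) ε₀) ∧
    ∀ x ∈ ball2 y ε₀, dist2 (f x) (f y) = dist2 x y

/-- The measure `μ_i` is `δ`-Ahlfors regular. -/
def IsAhlfors {Z : Type*} [MetricSpace Z] [MeasurableSpace Z] (μ : Measure Z) (δ : ℝ) : Prop :=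
  ∃ c₁ c₂ r₀ : ℝ, 0 < c₁ ∧ c₁ ≤ 1 ∧ 1 ≤ c₂ ∧ 0 < r₀ ∧
    ∀ (z : Z) (r : ℝ), 0 < r → r ≤ r₀ →
      ENNReal.ofReal (c₁ * r ^ δ) ≤ μ (Metric.ball z r) ∧
        μ (Metric.ball z r) ≤ ENNReal.ofReal (c₂ * r ^ δ)

/-- The dimensional number `s(u,v,i)`, for `v i` possibly infinite. -/
def dimNumI (δ u : Fin d → ℝ) (v : Fin d → ℝ≥0∞) (i : Fin d) : ℝ :=
  if v i = ⊤ then ∑ k ∈ Finset.univ.filter (fun k => v k ≠ ⊤), δ k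
  else (∑ k ∈ Finset.univ.filter (fun k => (v i).toReal < u k), δ k)
    + (∑ k ∈ Finset.univ.filter (fun k => v k ≤ v i),
        δ k * (1 - ((v k).toReal - u k) / (v i).toReal))
    + ∑ k ∈ Finset.univ.filter (fun k => ¬((v i).toReal < u k) ∧ ¬(v k ≤ v i)),
        δ k * u k / (v i).toReal

/-- The dimensional number `s(u,v) = min_{1≤i≤d} s(u,v,i)`. -/
def dimNum (δ u : Fin d → ℝ) (v : Fin d → ℝ≥0∞) : ℝ := ⨅ i, dimNumI δ u v i


/-- The diameter of a set for the product `ℓ²` distance. -/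
def diam2 {E : Fin d → Type*} [∀ i, MetricSpace (E i)] (S : Set (∀ i, E i)) : ℝ :=
  sSup {t : ℝ | ∃ x ∈ S, ∃ y ∈ S, t = dist2 x y}

/-- If a fixed proportion of every open set can be filled by finitely many disjoint closed sets
of a family, then every open set can be filled up to an arbitrarily small measure. -/
theorem exists_finset_measure_diff_le {Z : Type*} [TopologicalSpace Z] [MeasurableSpace Z]
    [OpensMeasurableSpace Z] (m : Measure Z) [IsFiniteMeasure m] {R : ℕ → Set Z} {n₀ : ℕ}
    (hR : ∀ n ≥ n₀, IsClosed (R n)) {c : ℝ≥0∞} (hc : 0 < c)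
    (hV : ∀ G : Set Z, IsOpen G → ∀ N : ℕ, ∃ J : Finset ℕ, (∀ n ∈ J, N ≤ n ∧ R n ⊆ G) ∧
      (J : Set ℕ).PairwiseDisjoint R ∧ c * m G ≤ m (⋃ n ∈ J, R n))
    {G : Set Z} (hG : IsOpen G) (N : ℕ) {ε : ℝ≥0∞} (hε : 0 < ε) :
    ∃ J : Finset ℕ, (∀ n ∈ J, N ≤ n ∧ R n ⊆ G) ∧ (J : Set ℕ).PairwiseDisjoint R ∧
      m (G \ ⋃ n ∈ J, R n) ≤ ε := by
  have key : ∀ k : ℕ, ∃ J : Finset ℕ, (∀ n ∈ J, max N n₀ ≤ n ∧ R n ⊆ G) ∧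
      (J : Set ℕ).PairwiseDisjoint R ∧ m (G \ ⋃ n ∈ J, R n) ≤ (1 - c) ^ k * m G := by
    intro k
    induction k with
    | zero => exact ⟨∅, by simp, by simp, by simp⟩
    | succ k ih =>
      obtain ⟨J, hJ, hJd, hJm⟩ := ih
      have hcl : IsClosed (⋃ n ∈ J, R n) :=
        isClosed_biUnion_finset fun n hn => hR n (le_trans (le_max_right _ _) (hJ n hn).1)
      obtain ⟨J', hJ', hJd', hJm'⟩ := hV _ (hG.sdiff hcl) (max N n₀)
      have hcl' : IsClosed (⋃ n ∈ J', R n) :=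
        isClosed_biUnion_finset fun n hn => hR n (le_trans (le_max_right _ _) (hJ' n hn).1)
      classical
      have hcross : ∀ a ∈ J, ∀ b ∈ J', Disjoint (R a) (R b) := by
        intro a ha b hb
        rw [Set.disjoint_left]
        intro x hxa hxb
        exact ((hJ' b hb).2 hxb).2 (mem_biUnion (x := a) (by simpa using ha) hxa)
      refine ⟨J ∪ J', ?_, ?_, ?_⟩
      · intro n hn
        rcases Finset.mem_union.1 hn with h | h
        · exact hJ n h
        · exact ⟨(hJ' n h).1, (hJ' n h).2.trans sdiff_subset⟩
      · intro a ha b hb hab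
        rcases Finset.mem_union.1 (Finset.mem_coe.1 ha) with h | h <;>
          rcases Finset.mem_union.1 (Finset.mem_coe.1 hb) with h' | h'
        · exact hJd h h' hab
        · exact hcross a h b h'
        · exact (hcross b h' a h).symm
        · exact hJd' h h' hab
      · have h1 : G \ ⋃ n ∈ J ∪ J', R n = (G \ ⋃ n ∈ J, R n) \ ⋃ n ∈ J', R n := by
          rw [Finset.set_biUnion_union, sdiff_sdiff]
        rw [h1, measure_sdiff (iUnion₂_subset fun n hn => (hJ' n hn).2)
          hcl'.measurableSet.nullMeasurableSet (measure_ne_top _ _)]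
        calc m (G \ ⋃ n ∈ J, R n) - m (⋃ n ∈ J', R n)
            ≤ m (G \ ⋃ n ∈ J, R n) - c * m (G \ ⋃ n ∈ J, R n) := tsub_le_tsub_left hJm' _
          _ = (1 - c) * m (G \ ⋃ n ∈ J, R n) := by
              rw [ENNReal.sub_mul (fun _ _ => measure_ne_top _ _), one_mul]
          _ ≤ (1 - c) * ((1 - c) ^ k * m G) := by gcongr
          _ = (1 - c) ^ (k + 1) * m G := by rw [pow_succ']; ring
  have hlim : Tendsto (fun k : ℕ => (1 - c) ^ k * m G) atTop (nhds 0) := by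
    have h := ENNReal.tendsto_pow_atTop_nhds_zero_of_lt_one
      (ENNReal.sub_lt_self ENNReal.one_ne_top one_ne_zero hc.ne')
    simpa using ENNReal.Tendsto.mul_const h (Or.inr (measure_ne_top m G))
  obtain ⟨k, hk⟩ := (hlim.eventually_lt_const hε).exists
  obtain ⟨J, hJ, hJd, hJm⟩ := key k
  exact ⟨J, fun n hn => ⟨le_trans (le_max_left _ _) (hJ n hn).1, (hJ n hn).2⟩, hJd,
    hJm.trans hk.le⟩

/-- A compact set carries positive Hausdorff measure when it is a decreasing intersection of
closed sets supporting measures of uniformly positive mass which satisfy a uniform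
Frostman condition. -/
theorem hausdorffMeasure_iInter_ne_zero {Z : Type*} [MetricSpace Z] [CompactSpace Z]
    [MeasurableSpace Z] [BorelSpace Z] {F : ℕ → Set Z} (hF : ∀ k, IsClosed (F k))
    (hanti : Antitone F) (θ : ℕ → Measure Z) {a : ℝ≥0∞} (ha : 0 < a)
    (hmass : ∀ k, a ≤ θ k (F k)) {t B : ℝ} (ht : 0 < t)
    (hball : ∀ k x ρ, 0 < ρ → θ k (Metric.ball x ρ) ≤ ENNReal.ofReal (B * ρ ^ t)) :
    μH[t] (⋂ k, F k) ≠ 0 := by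
  intro h0
  have hB : ∀ k x ρ, 0 < ρ →
      θ k (Metric.ball x ρ) ≤ ENNReal.ofReal (|B| + 1) * ENNReal.ofReal (ρ ^ t) := by
    intro k x ρ hρ
    rw [← ENNReal.ofReal_mul (by positivity)]
    refine (hball k x ρ hρ).trans (ENNReal.ofReal_le_ofReal ?_)
    have : 0 ≤ ρ ^ t := by positivity
    nlinarith [le_abs_self B]
  obtain ⟨ε, hε0, hε⟩ : ∃ ε : ℝ≥0∞, 0 < ε ∧ ENNReal.ofReal (|B| + 1) * (ε + ε) < a := by
    have hlim : Tendsto (fun ε : ℝ≥0∞ => ENNReal.ofReal (|B| + 1) * (ε + ε)) (nhds 0)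
        (nhds (ENNReal.ofReal (|B| + 1) * (0 + 0))) :=
      ENNReal.Tendsto.const_mul (tendsto_id.add tendsto_id) (Or.inr ENNReal.ofReal_ne_top)
    rw [add_zero, mul_zero] at hlim
    have := hlim.eventually_lt_const ha
    have h2 : ∀ᶠ ε : ℝ≥0∞ in nhdsWithin 0 (Ioi 0), 0 < ε := self_mem_nhdsWithin
    obtain ⟨ε, h3, h4⟩ := (h2.and (this.filter_mono nhdsWithin_le_nhds)).exists
    exact ⟨ε, h3, h4⟩
  rw [Measure.hausdorffMeasure_apply] at h0
  have h1 := (ENNReal.iSup_eq_zero.1 h0) 1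
  have h2 := (ENNReal.iSup_eq_zero.1 h1) one_pos
  obtain ⟨T, hT⟩ := iInf_lt_iff.1 (h2.trans_lt hε0)
  obtain ⟨hcov, hT⟩ := iInf_lt_iff.1 hT
  obtain ⟨hdiam, hsum⟩ := iInf_lt_iff.1 hT
  obtain ⟨ε', hε'0, hε'⟩ := ENNReal.exists_pos_sum_of_countable' hε0.ne' ℕ
  have hopen : ∀ j, ∃ O : Set Z, IsOpen O ∧ T j ⊆ O ∧ ∀ k, θ k O ≤ ENNReal.ofReal (|B| + 1) *
      ((⨆ _ : (T j).Nonempty, Metric.ediam (T j) ^ t) + ε' j) := by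
    intro j
    rcases (T j).eq_empty_or_nonempty with he | hne
    · exact ⟨∅, isOpen_empty, by simp [he], by simp⟩
    obtain ⟨p, hp⟩ := hne
    have hfin : Metric.ediam (T j) ≠ ∞ := ne_top_of_le_ne_top ENNReal.one_ne_top (hdiam j)
    obtain ⟨e, he0, he⟩ : ∃ e : ℝ, 0 < e ∧
        ENNReal.ofReal (((Metric.ediam (T j)).toReal + e) ^ t)
          ≤ Metric.ediam (T j) ^ t + ε' j := by
      have hc : Tendsto (fun e : ℝ => ENNReal.ofReal (((Metric.ediam (T j)).toReal + e) ^ t))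
          (nhds 0) (nhds (ENNReal.ofReal (((Metric.ediam (T j)).toReal + 0) ^ t))) := by
        apply ENNReal.tendsto_ofReal
        exact ((tendsto_const_nhds.add tendsto_id).rpow_const (Or.inr ht.le))
      have hval : ENNReal.ofReal (((Metric.ediam (T j)).toReal + 0) ^ t)
          = Metric.ediam (T j) ^ t := by
        rw [add_zero, ← ENNReal.ofReal_rpow_of_nonneg ENNReal.toReal_nonneg ht.le,
          ENNReal.ofReal_toReal hfin]
      rw [hval] at hc
      have hlt : Metric.ediam (T j) ^ t < Metric.ediam (T j) ^ t + ε' j :=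
        ENNReal.lt_add_right (ENNReal.rpow_ne_top_of_nonneg ht.le hfin) (hε'0 j).ne'
      have h3 := hc.eventually_lt_const hlt
      have h4 : ∀ᶠ e : ℝ in nhdsWithin 0 (Ioi 0), 0 < e := self_mem_nhdsWithin
      obtain ⟨e, h5, h6⟩ := (h4.and (h3.filter_mono nhdsWithin_le_nhds)).exists
      exact ⟨e, h5, h6.le⟩
    have hpos : 0 < (Metric.ediam (T j)).toReal + e :=
      add_pos_of_nonneg_of_pos ENNReal.toReal_nonneg he0
    refine ⟨Metric.ball p ((Metric.ediam (T j)).toReal + e), Metric.isOpen_ball, ?_, ?_⟩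
    · intro q hq
      have h3 := Metric.edist_le_ediam_of_mem hq hp
      rw [Metric.mem_ball, dist_edist]
      have := ENNReal.toReal_mono hfin h3
      linarith
    · intro k
      refine (hB k p _ hpos).trans ?_
      gcongr
      rwa [iSup_pos ⟨p, hp⟩]
  choose O hOo hTO hθO using hopen
  have hsub : (⋂ k, F k) ⊆ ⋃ j, O j := hcov.trans (iUnion_mono hTO)
  obtain ⟨k, hk⟩ := exists_subset_nhds_of_isCompact' (V := F) hanti.directed_ge
    (fun k => (hF k).isCompact) hF
    (fun x hx => (isOpen_iUnion hOo).mem_nhds (hsub hx))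
  have : a ≤ ENNReal.ofReal (|B| + 1) * (ε + ε) :=
    calc a ≤ θ k (F k) := hmass k
      _ ≤ θ k (⋃ j, O j) := measure_mono hk
      _ ≤ ∑' j, θ k (O j) := measure_iUnion_le _
      _ ≤ ∑' j, ENNReal.ofReal (|B| + 1) *
          ((⨆ _ : (T j).Nonempty, Metric.ediam (T j) ^ t) + ε' j) :=
            ENNReal.tsum_le_tsum fun j => hθO j k
      _ = ENNReal.ofReal (|B| + 1) *
          ((∑' j, ⨆ _ : (T j).Nonempty, Metric.ediam (T j) ^ t) + ∑' j, ε' j) := by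
            rw [ENNReal.tsum_mul_left, ENNReal.tsum_add]
      _ ≤ ENNReal.ofReal (|B| + 1) * (ε + ε) := by gcongr
  exact absurd this (not_le.2 hε)

/-- The measure obtained from `θ` by redistributing, for each `n ∈ J`, the mass of `R n`
uniformly (with respect to `m`) over `P n`. -/
def redistribute {Z : Type*} [MeasurableSpace Z] (m θ : Measure Z) (R P : ℕ → Set Z)
    (J : Finset ℕ) : Measure Z :=
  ∑ n ∈ J, (θ (R n) / m (P n)) • m.restrict (P n)

theorem redistribute_apply {Z : Type*} [MeasurableSpace Z] (m θ : Measure Z) (R P : ℕ → Set Z)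
    (J : Finset ℕ) {S : Set Z} (hS : MeasurableSet S) :
    redistribute m θ R P J S = ∑ n ∈ J, θ (R n) / m (P n) * m (S ∩ P n) := by
  simp [redistribute, Measure.restrict_apply hS]

/-- A ball of radius `ρ` does not gain more mass by redistribution than what is contained in a
slightly larger ball. -/
theorem redistribute_ball_le {Z : Type*} [MetricSpace Z] [MeasurableSpace Z] [BorelSpace Z]
    (m θ : Measure Z) {R P : ℕ → Set Z} {J : Finset ℕ}
    (hclosed : ∀ n ∈ J, IsClosed (R n)) (hPR : ∀ n ∈ J, P n ⊆ R n)
    (hdisj : (J : Set ℕ).PairwiseDisjoint R) {η : ℝ}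
    (hdiam : ∀ n ∈ J, ∀ x ∈ R n, ∀ y ∈ R n, dist x y ≤ η) (x : Z) (ρ : ℝ) :
    redistribute m θ R P J (Metric.ball x ρ) ≤ θ (Metric.ball x (ρ + η)) := by
  classical
  rw [redistribute_apply _ _ _ _ _ measurableSet_ball]
  calc ∑ n ∈ J, θ (R n) / m (P n) * m (Metric.ball x ρ ∩ P n)
      ≤ ∑ n ∈ J, θ (R n ∩ Metric.ball x (ρ + η)) := by
        refine Finset.sum_le_sum fun n hn => ?_
        rcases (Metric.ball x ρ ∩ P n).eq_empty_or_nonempty with he | ⟨p, hp1, hp2⟩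
        · simp [he]
        have hsub : R n ⊆ Metric.ball x (ρ + η) := by
          intro y hy
          have h1 := hdiam n hn y hy p (hPR n hn hp2)
          have h2 := dist_triangle y p x
          rw [Metric.mem_ball] at hp1 ⊢
          linarith
        rw [inter_eq_left.2 hsub]
        calc θ (R n) / m (P n) * m (Metric.ball x ρ ∩ P n)
            ≤ θ (R n) / m (P n) * m (P n) := by gcongr; exact inter_subset_right
          _ ≤ θ (R n) := by
              rw [div_eq_mul_inv, mul_assoc]
              exact mul_le_of_le_one_right' (ENNReal.inv_mul_le_one _)
    _ = θ (⋃ n ∈ J, R n ∩ Metric.ball x (ρ + η)) := by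
        rw [measure_biUnion_finset]
        · exact hdisj.mono fun n => inter_subset_left
        · exact fun n hn => (hclosed n hn).measurableSet.inter measurableSet_ball
    _ ≤ θ (Metric.ball x (ρ + η)) :=
        measure_mono (iUnion₂_subset fun n _ => inter_subset_right)

/-- Mass of small balls after redistribution. -/
theorem redistribute_small_ball_le {Z : Type*} [MetricSpace Z] [MeasurableSpace Z] [BorelSpace Z]
    (m θ : Measure Z) {R P : ℕ → Set Z} {J : Finset ℕ} {M K : ℝ≥0∞} (hθ : θ ≤ M • m)
    (hclosed : ∀ n ∈ J, IsClosed (R n)) (hP0 : ∀ n ∈ J, m (P n) ≠ 0)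
    (hPtop : ∀ n ∈ J, m (P n) ≠ ∞)
    (hdisj : (J : Set ℕ).PairwiseDisjoint R) (x : Z) (ρ : ℝ)
    (hstar : ∀ n ∈ J, m (R n) * m (Metric.ball x ρ ∩ P n) ≤
      K * m (P n) * m (R n ∩ Metric.ball x (2 * ρ))) :
    redistribute m θ R P J (Metric.ball x ρ) ≤ M * K * m (Metric.ball x (2 * ρ)) := by
  rw [redistribute_apply _ _ _ _ _ measurableSet_ball]
  calc ∑ n ∈ J, θ (R n) / m (P n) * m (Metric.ball x ρ ∩ P n)
      ≤ ∑ n ∈ J, M * K * m (R n ∩ Metric.ball x (2 * ρ)) := by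
        refine Finset.sum_le_sum fun n hn => ?_
        calc θ (R n) / m (P n) * m (Metric.ball x ρ ∩ P n)
            ≤ (M * m (R n)) / m (P n) * m (Metric.ball x ρ ∩ P n) := by
              gcongr
              simpa using hθ (R n)
          _ = M * (m (R n) * m (Metric.ball x ρ ∩ P n)) * (m (P n))⁻¹ := by
              rw [div_eq_mul_inv]; ring
          _ ≤ M * (K * m (P n) * m (R n ∩ Metric.ball x (2 * ρ))) * (m (P n))⁻¹ := by
              gcongr M * ?_ * _
              exact hstar n hn
          _ = M * K * m (R n ∩ Metric.ball x (2 * ρ)) * (m (P n) * (m (P n))⁻¹) := by ring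
          _ = M * K * m (R n ∩ Metric.ball x (2 * ρ)) := by
              rw [ENNReal.mul_inv_cancel (hP0 n hn) (hPtop n hn), mul_one]
    _ = M * K * m (⋃ n ∈ J, R n ∩ Metric.ball x (2 * ρ)) := by
        rw [← Finset.mul_sum, measure_biUnion_finset]
        · exact hdisj.mono fun n => inter_subset_left
        · exact fun n hn => (hclosed n hn).measurableSet.inter measurableSet_ball
    _ ≤ M * K * m (Metric.ball x (2 * ρ)) := by
        gcongr
        exact iUnion₂_subset fun n _ => inter_subset_right

/-- Closed sets `R n` and open subsets `P n` such that the `R n` fill a fixed proportion of every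
open set, while `P n` is spread out inside `R n` in an `s`-dimensional way. -/
structure IsTransferSystem {Z : Type*} [MetricSpace Z] [MeasurableSpace Z] (m : Measure Z)
    (R P E : ℕ → Set Z) (n₀ : ℕ) (s D C : ℝ) (c : ℝ≥0∞) : Prop where
  isClosed : ∀ n ≥ n₀, IsClosed (R n)
  isOpen : ∀ n ≥ n₀, IsOpen (P n)
  subset : ∀ n ≥ n₀, P n ⊆ R n
  closure_subset : ∀ n ≥ n₀, closure (P n) ⊆ E n
  measure_ne_zero : ∀ n ≥ n₀, m (P n) ≠ 0
  diam_le : ∀ η > 0, ∀ᶠ n in atTop, ∀ x ∈ R n, ∀ y ∈ R n, dist x y ≤ η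
  pos_const : 0 < C
  measure_ball_le : ∀ x ρ, 0 < ρ → m (Metric.ball x ρ) ≤ ENNReal.ofReal (C * ρ ^ D)
  spread : ∀ n ≥ n₀, ∀ x ρ, 0 < ρ → ρ ≤ 1 → m (R n) * m (Metric.ball x ρ ∩ P n) ≤
    ENNReal.ofReal (C * ρ ^ (s - D)) * m (P n) * m (R n ∩ Metric.ball x (2 * ρ))
  pos_filling : 0 < c
  filling : ∀ G : Set Z, IsOpen G → ∀ N : ℕ, ∃ J : Finset ℕ, (∀ n ∈ J, N ≤ n ∧ R n ⊆ G) ∧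
    (J : Set ℕ).PairwiseDisjoint R ∧ c * m G ≤ m (⋃ n ∈ J, R n)

/-- A measure of bounded density with mass larger than `a`, concentrated on the open set `G`, and
satisfying a Frostman condition with constant strictly smaller than `B`. -/
def IsFrostmanState {Z : Type*} [MetricSpace Z] [MeasurableSpace Z] (m : Measure Z)
    (t B : ℝ) (a : ℝ≥0∞) (p : Measure Z × Set Z) : Prop :=
  IsOpen p.2 ∧ p.1 p.2ᶜ = 0 ∧ a < p.1 univ ∧ (∃ M : ℝ≥0, p.1 ≤ M • m) ∧
    ∃ b, 0 < b ∧ b < B ∧ ∀ x ρ, 0 < ρ → p.1 (Metric.ball x ρ) ≤ ENNReal.ofReal (b * ρ ^ t)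

theorem IsFrostmanState.exists_next {Z : Type*} [MetricSpace Z] [MeasurableSpace Z] [BorelSpace Z]
    {m : Measure Z} [IsFiniteMeasure m] {R P E : ℕ → Set Z} {n₀ : ℕ} {s D C : ℝ} {c : ℝ≥0∞}
    (hS : IsTransferSystem m R P E n₀ s D C c) {t B : ℝ} {a : ℝ≥0∞} (ht : 0 < t) (hts : t < s)
    {p : Measure Z × Set Z} (hp : IsFrostmanState m t B a p) (N : ℕ) :
    ∃ q, IsFrostmanState m t B a q ∧ closure q.2 ⊆ p.2 ∩ ⋃ n ≥ N, E n := by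
  classical
  obtain ⟨θ, G⟩ := p
  obtain ⟨hG, hθG, ha, ⟨M, hM⟩, b, hb0, hbB, hb⟩ := hp
  simp only at hG hθG ha hM hb
  have hM' : θ ≤ (M : ℝ≥0∞) • m := hM
  obtain ⟨b', hbb', hb'B⟩ := exists_between hbB
  have hb'0 : 0 < b' := hb0.trans hbb'
  have hC := hS.pos_const
  set Q : ℝ := M * C * (C * 2 ^ D) with hQ
  have hQ0 : 0 ≤ Q := by positivity
  obtain ⟨ρ₁, hρ₁0, hρ₁1, hρ₁⟩ : ∃ ρ₁ : ℝ, 0 < ρ₁ ∧ ρ₁ ≤ 1 ∧ Q * ρ₁ ^ (s - t) ≤ b' := by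
    have hlim : Tendsto (fun ρ : ℝ => Q * ρ ^ (s - t)) (nhds 0) (nhds (Q * 0 ^ (s - t))) :=
      (tendsto_id.rpow_const (Or.inr (sub_pos.2 hts).le)).const_mul Q
    rw [Real.zero_rpow (sub_pos.2 hts).ne', mul_zero] at hlim
    have h1 := (hlim.eventually_lt_const hb'0).filter_mono (nhdsWithin_le_nhds (s := Ioi 0))
    have h2 : ∀ᶠ e : ℝ in nhdsWithin 0 (Ioi 0), 0 < e := self_mem_nhdsWithin
    have h3 : ∀ᶠ e : ℝ in nhdsWithin 0 (Ioi 0), e < 1 :=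
      (eventually_lt_nhds one_pos).filter_mono nhdsWithin_le_nhds
    obtain ⟨e, he1, he2, he3⟩ := (h1.and (h2.and h3)).exists
    exact ⟨e, he2, he3.le, he1.le⟩
  obtain ⟨η, hη0, hη⟩ : ∃ η : ℝ, 0 < η ∧ b * (1 + η / ρ₁) ^ t ≤ b' := by
    have hlim : Tendsto (fun η : ℝ => b * (1 + η / ρ₁) ^ t) (nhds 0)
        (nhds (b * (1 + 0 / ρ₁) ^ t)) :=
      ((tendsto_const_nhds.add (tendsto_id.div_const ρ₁)).rpow_const (Or.inr ht.le)).const_mul b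
    rw [zero_div, add_zero, Real.one_rpow, mul_one] at hlim
    have h1 := (hlim.eventually_lt_const hbb').filter_mono (nhdsWithin_le_nhds (s := Ioi 0))
    have h2 : ∀ᶠ e : ℝ in nhdsWithin 0 (Ioi 0), 0 < e := self_mem_nhdsWithin
    obtain ⟨e, he1, he2⟩ := (h1.and h2).exists
    exact ⟨e, he2, he1.le⟩
  obtain ⟨N₁, hN₁⟩ := eventually_atTop.1 (hS.diam_le η hη0)
  obtain ⟨ε, hε0, hε⟩ : ∃ ε : ℝ≥0∞, 0 < ε ∧ a + M * ε < θ univ := by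
    have hlim : Tendsto (fun ε : ℝ≥0∞ => a + M * ε) (nhds 0) (nhds (a + M * 0)) :=
      tendsto_const_nhds.add
        (ENNReal.Tendsto.const_mul tendsto_id (Or.inr ENNReal.coe_ne_top))
    rw [mul_zero, add_zero] at hlim
    have h1 := (hlim.eventually_lt_const ha).filter_mono (nhdsWithin_le_nhds (s := Ioi 0))
    have h2 : ∀ᶠ e : ℝ≥0∞ in nhdsWithin 0 (Ioi 0), 0 < e := self_mem_nhdsWithin
    obtain ⟨e, he1, he2⟩ := (h1.and h2).exists
    exact ⟨e, he2, he1⟩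
  obtain ⟨J, hJ, hJd, hJm⟩ := exists_finset_measure_diff_le m hS.isClosed hS.pos_filling
    hS.filling hG (max N (max n₀ N₁)) hε0
  have hJN : ∀ n ∈ J, N ≤ n := fun n hn => (le_max_left _ _).trans (hJ n hn).1
  have hJ0 : ∀ n ∈ J, n₀ ≤ n := fun n hn =>
    ((le_max_left _ _).trans (le_max_right _ _)).trans (hJ n hn).1
  have hJ1 : ∀ n ∈ J, N₁ ≤ n := fun n hn =>
    ((le_max_right _ _).trans (le_max_right _ _)).trans (hJ n hn).1
  have hPtop : ∀ n ∈ J, m (P n) ≠ ∞ := fun n _ => measure_ne_top _ _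
  have hP0 : ∀ n ∈ J, m (P n) ≠ 0 := fun n hn => hS.measure_ne_zero n (hJ0 n hn)
  have hcl : ∀ n ∈ J, IsClosed (R n) := fun n hn => hS.isClosed n (hJ0 n hn)
  have hPR : ∀ n ∈ J, P n ⊆ R n := fun n hn => hS.subset n (hJ0 n hn)
  have hθtop : ∀ S, θ S ≠ ∞ := fun S => ne_top_of_le_ne_top
    (ENNReal.mul_ne_top ENNReal.coe_ne_top (measure_ne_top m S)) (by simpa using hM' S)
  have hGo : IsOpen (⋃ n ∈ J, P n) :=
    isOpen_biUnion fun n hn => hS.isOpen n (hJ0 n hn)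
  refine ⟨(redistribute m θ R P J, ⋃ n ∈ J, P n), ⟨hGo, ?_, ?_, ?_, ?_⟩, ?_⟩
  · simp only
    rw [redistribute_apply _ _ _ _ _ hGo.measurableSet.compl]
    refine Finset.sum_eq_zero fun n hn => ?_
    have : (⋃ n ∈ J, P n)ᶜ ∩ P n = ∅ := by
      ext x
      simp only [mem_inter_iff, mem_compl_iff, mem_iUnion, mem_empty_iff_false, iff_false]
      exact fun h => h.1 ⟨n, hn, h.2⟩
    rw [this, measure_empty, mul_zero]
  · simp only
    rw [redistribute_apply _ _ _ _ _ MeasurableSet.univ]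
    have h1 : ∑ n ∈ J, θ (R n) / m (P n) * m (univ ∩ P n) = θ (⋃ n ∈ J, R n) := by
      rw [measure_biUnion_finset hJd fun n hn => (hcl n hn).measurableSet]
      refine Finset.sum_congr rfl fun n hn => ?_
      rw [univ_inter, ENNReal.div_mul_cancel (hP0 n hn) (hPtop n hn)]
    rw [h1]
    have h2 : θ univ ≤ θ (⋃ n ∈ J, R n) + M * ε := by
      calc θ univ ≤ θ ((⋃ n ∈ J, R n) ∪ (G \ ⋃ n ∈ J, R n) ∪ Gᶜ) := by
            refine measure_mono fun x _ => ?_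
            by_cases hx : x ∈ G <;> by_cases hx' : x ∈ ⋃ n ∈ J, R n <;> simp [hx, hx']
        _ ≤ θ (⋃ n ∈ J, R n) + θ (G \ ⋃ n ∈ J, R n) + θ Gᶜ :=
            (measure_union_le _ _).trans (by gcongr; exact measure_union_le _ _)
        _ ≤ θ (⋃ n ∈ J, R n) + M * ε := by
            rw [hθG, add_zero]
            gcongr
            calc θ (G \ ⋃ n ∈ J, R n) ≤ M * m (G \ ⋃ n ∈ J, R n) := by simpa using hM' _
              _ ≤ M * ε := by gcongr
    have h3 := hε.trans_le h2
    exact lt_of_add_lt_add_right h3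
  · refine ⟨∑ n ∈ J, (θ (R n) / m (P n)).toNNReal, ?_⟩
    simp only [redistribute]
    rw [Finset.sum_smul]
    refine Finset.sum_le_sum fun n hn => ?_
    have hfin : θ (R n) / m (P n) ≠ ∞ := ENNReal.div_ne_top (hθtop _) (hP0 n hn)
    intro S
    rw [Measure.smul_apply, Measure.smul_apply, smul_eq_mul, ENNReal.smul_def, smul_eq_mul,
      ENNReal.coe_toNNReal hfin]
    gcongr
    exact Measure.restrict_le_self
  · refine ⟨b', hb'0, hb'B, fun x ρ hρ => ?_⟩
    rcases le_or_gt ρ ρ₁ with hle | hgt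
    · refine (redistribute_small_ball_le m θ hM' hcl hP0 hPtop hJd x ρ
        (K := ENNReal.ofReal (C * ρ ^ (s - D))) fun n hn =>
          hS.spread n (hJ0 n hn) x ρ hρ (hle.trans hρ₁1)).trans ?_
      calc (M : ℝ≥0∞) * ENNReal.ofReal (C * ρ ^ (s - D)) * m (Metric.ball x (2 * ρ))
          ≤ (M : ℝ≥0∞) * ENNReal.ofReal (C * ρ ^ (s - D)) * ENNReal.ofReal (C * (2 * ρ) ^ D) := by
            gcongr
            exact hS.measure_ball_le _ _ (by positivity)
        _ = ENNReal.ofReal (M * (C * ρ ^ (s - D)) * (C * (2 * ρ) ^ D)) := by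
            rw [ENNReal.ofReal_mul (p := M * (C * ρ ^ (s - D))) (by positivity),
              ENNReal.ofReal_mul (p := (M : ℝ)) (by positivity), ENNReal.ofReal_coe_nnreal]
        _ ≤ ENNReal.ofReal (b' * ρ ^ t) := by
            refine ENNReal.ofReal_le_ofReal ?_
            have e1 : (M : ℝ) * (C * ρ ^ (s - D)) * (C * (2 * ρ) ^ D)
                = Q * ρ ^ (s - t) * ρ ^ t := by
              rw [hQ, Real.mul_rpow (by norm_num) hρ.le, mul_assoc _ (ρ ^ (s - t)),
                ← Real.rpow_add hρ, show s - t + t = (s - D) + D by ring, Real.rpow_add hρ]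
              ring
            rw [e1]
            gcongr
            refine le_trans ?_ hρ₁
            gcongr
    · refine (redistribute_ball_le m θ hcl hPR hJd (fun n hn => hN₁ n (hJ1 n hn)) x ρ).trans ?_
      refine (hb x (ρ + η) (by positivity)).trans (ENNReal.ofReal_le_ofReal ?_)
      have e1 : ρ + η ≤ (1 + η / ρ₁) * ρ := by
        have : η ≤ η / ρ₁ * ρ := by
          rw [div_mul_eq_mul_div, le_div_iff₀ hρ₁0]
          gcongr
        linarith
      calc b * (ρ + η) ^ t ≤ b * ((1 + η / ρ₁) * ρ) ^ t := by gcongr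
        _ = b * (1 + η / ρ₁) ^ t * ρ ^ t := by
            rw [Real.mul_rpow (by positivity) hρ.le]; ring
        _ ≤ b' * ρ ^ t := by gcongr
  · simp only
    rw [Finset.closure_biUnion]
    refine iUnion₂_subset fun n hn x hx => ⟨?_, ?_⟩
    · exact (hJ n hn).2 (closure_minimal (hPR n hn) (hcl n hn) hx)
    · exact mem_iUnion₂.2 ⟨n, hJN n hn, hS.closure_subset n (hJ0 n hn) hx⟩

/-- Lower bound for the Hausdorff dimension of the limsup set attached to a transfer system. -/
theorem IsTransferSystem.le_dimH_limsup {Z : Type*} [MetricSpace Z] [CompactSpace Z]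
    [MeasurableSpace Z] [BorelSpace Z] {m : Measure Z} [IsFiniteMeasure m] (hm : m univ ≠ 0)
    {R P E : ℕ → Set Z} {n₀ : ℕ} {s D C : ℝ} {c : ℝ≥0∞}
    (hS : IsTransferSystem m R P E n₀ s D C c) {t : ℝ} (ht : 0 < t) (hts : t < s) (htD : t ≤ D) :
    ENNReal.ofReal t ≤ dimH (atTop.limsup E) := by
  set b : ℝ := C + m.real univ with hb
  have hC := hS.pos_const
  have hinit : IsFrostmanState m t (b + 1) (m univ / 2) (m, univ) := by
    refine ⟨isOpen_univ, by simp, ENNReal.half_lt_self hm (measure_ne_top _ _), ⟨1, by simp⟩,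
      b, by positivity, by linarith, fun x ρ hρ => ?_⟩
    rcases le_or_gt ρ 1 with h1 | h1
    · refine (hS.measure_ball_le x ρ hρ).trans (ENNReal.ofReal_le_ofReal ?_)
      have h2 : ρ ^ D ≤ ρ ^ t := Real.rpow_le_rpow_of_exponent_ge hρ h1 htD
      calc C * ρ ^ D ≤ C * ρ ^ t := by gcongr
        _ ≤ b * ρ ^ t := by gcongr; rw [hb]; linarith [measureReal_nonneg (μ := m) (s := univ)]
    · calc m (Metric.ball x ρ) ≤ m univ := measure_mono (subset_univ _)
        _ = ENNReal.ofReal (m.real univ) := by rw [ofReal_measureReal]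
        _ ≤ ENNReal.ofReal (b * ρ ^ t) := by
            refine ENNReal.ofReal_le_ofReal ?_
            have h2 : 1 ≤ ρ ^ t := Real.one_le_rpow h1.le ht.le
            have h3 : 0 ≤ m.real univ := measureReal_nonneg
            nlinarith
  choose! next hnext hsub using fun (p : Measure Z × Set Z) (N : ℕ)
    (hp : IsFrostmanState m t (b + 1) (m univ / 2) p) => hp.exists_next hS ht hts N
  let p : ℕ → Measure Z × Set Z := fun k => Nat.rec (m, univ) (fun k q => next q k) k
  have hp : ∀ k, IsFrostmanState m t (b + 1) (m univ / 2) (p k) := by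
    intro k
    induction k with
    | zero => exact hinit
    | succ k ih => exact hnext _ _ ih
  have hps : ∀ k, closure (p (k + 1)).2 ⊆ (p k).2 ∩ ⋃ n ≥ k, E n := fun k => hsub _ _ (hp k)
  have hne : μH[t] (⋂ k, closure (p k).2) ≠ 0 := by
    refine hausdorffMeasure_iInter_ne_zero (B := b + 1) (fun k => isClosed_closure)
      (antitone_nat_of_succ_le fun k => ((hps k).trans inter_subset_left).trans subset_closure)
      (fun k => (p k).1) (a := m univ / 2) (ENNReal.half_pos hm) ?_ ht ?_
    · intro k
      obtain ⟨-, h0, ha, -⟩ := hp k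
      calc m univ / 2 ≤ (p k).1 univ := ha.le
        _ ≤ (p k).1 (closure (p k).2 ∪ (p k).2ᶜ) := by
            refine measure_mono fun x _ => ?_
            by_cases hx : x ∈ (p k).2
            · exact Or.inl (subset_closure hx)
            · exact Or.inr hx
        _ ≤ (p k).1 (closure (p k).2) + (p k).1 (p k).2ᶜ := measure_union_le _ _
        _ = (p k).1 (closure (p k).2) := by rw [h0, add_zero]
    · intro k x ρ hρ
      obtain ⟨-, -, -, -, b', -, hb', hball⟩ := hp k
      refine (hball x ρ hρ).trans (ENNReal.ofReal_le_ofReal ?_)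
      gcongr
  have hdim := le_dimH_of_hausdorffMeasure_ne_zero (d := t.toNNReal)
    (s := ⋂ k, closure (p k).2) (by rwa [Real.coe_toNNReal t ht.le])
  refine le_trans hdim (dimH_mono ?_)
  intro x hx
  rw [mem_limsup_iff_frequently_mem, frequently_atTop]
  intro N
  have := (hps N (mem_iInter.1 hx (N + 1))).2
  simp only [mem_iUnion] at this
  obtain ⟨n, hn, hxn⟩ := this
  exact ⟨n, hn, hxn⟩

/-- A measure with `ρ ^ D / C ≤ m (B(z, ρ))` for `ρ ≤ 1` and `m (B(z, ρ)) ≤ C ρ ^ D` for all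
`ρ`. -/
def IsRegularWith {Z : Type*} [MetricSpace Z] [MeasurableSpace Z] (m : Measure Z)
    (D C : ℝ) : Prop :=
  (∀ z ρ, 0 < ρ → ρ ≤ 1 → ENNReal.ofReal (C⁻¹ * ρ ^ D) ≤ m (Metric.ball z ρ)) ∧
    ∀ z ρ, 0 < ρ → m (Metric.closedBall z ρ) ≤ ENNReal.ofReal (C * ρ ^ D)

theorem IsRegularWith.mono {Z : Type*} [MetricSpace Z] [MeasurableSpace Z] {m : Measure Z}
    {D C C' : ℝ} (h : IsRegularWith m D C) (hC : 0 < C) (hCC' : C ≤ C') :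
    IsRegularWith m D C' := by
  refine ⟨fun z ρ h0 h1 => le_trans (ENNReal.ofReal_le_ofReal ?_) (h.1 z ρ h0 h1),
    fun z ρ h0 => (h.2 z ρ h0).trans (ENNReal.ofReal_le_ofReal ?_)⟩ <;> gcongr

theorem IsAhlfors.isFiniteMeasure {Z : Type*} [MetricSpace Z] [CompactSpace Z]
    [MeasurableSpace Z] {m : Measure Z} {D : ℝ} (h : IsAhlfors m D) : IsFiniteMeasure m := by
  obtain ⟨c₁, c₂, r₀, -, -, -, hr₀, hb⟩ := h
  have : IsLocallyFiniteMeasure m := ⟨fun x =>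
    ⟨Metric.ball x r₀, Metric.ball_mem_nhds x hr₀,
      (hb x r₀ hr₀ le_rfl).2.trans_lt ENNReal.ofReal_lt_top⟩⟩
  infer_instance

theorem IsAhlfors.exists_isRegularWith {Z : Type*} [MetricSpace Z] [CompactSpace Z]
    [MeasurableSpace Z] {m : Measure Z} {D : ℝ} (hD : 0 < D) (h : IsAhlfors m D) :
    ∃ C, 0 < C ∧ IsRegularWith m D C := by
  have := h.isFiniteMeasure
  obtain ⟨c₁, c₂, r₀, hc₁, -, hc₂, hr₀, hb⟩ := h
  set r₁ := min r₀ 1 with hr₁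
  have hr₁0 : 0 < r₁ := lt_min hr₀ one_pos
  have hM : 0 ≤ m.real univ := measureReal_nonneg
  set C := (c₁ * r₁ ^ D)⁻¹ + c₂ * 2 ^ D + m.real univ * (2 / r₀) ^ D with hC
  have hq1 : 0 < (c₁ * r₁ ^ D)⁻¹ := by positivity
  have hq2 : 0 < c₂ * 2 ^ D := by positivity
  have hq3 : 0 ≤ m.real univ * (2 / r₀) ^ D := by positivity
  have hC0 : 0 < C := by positivity
  refine ⟨C, hC0, fun z ρ h0 h1 => ?_, fun z ρ h0 => ?_⟩
  · have hle : ρ * r₁ ≤ ρ := mul_le_of_le_one_right h0.le (min_le_right _ _)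
    have hle' : ρ * r₁ ≤ r₀ := (mul_le_of_le_one_left hr₁0.le h1).trans (min_le_left _ _)
    refine le_trans ?_ ((hb z (ρ * r₁) (by positivity) hle').1.trans
      (measure_mono (Metric.ball_subset_ball hle)))
    refine ENNReal.ofReal_le_ofReal ?_
    have h2 : C⁻¹ ≤ c₁ * r₁ ^ D := inv_le_of_inv_le₀ (by positivity) (by rw [hC]; linarith)
    calc C⁻¹ * ρ ^ D ≤ c₁ * r₁ ^ D * ρ ^ D := by gcongr
      _ = c₁ * (ρ * r₁) ^ D := by rw [Real.mul_rpow h0.le hr₁0.le]; ring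
  · rcases le_or_gt (2 * ρ) r₀ with h1 | h1
    · refine (measure_mono (Metric.closedBall_subset_ball (by linarith : ρ < 2 * ρ))).trans
        ((hb z (2 * ρ) (by positivity) h1).2.trans (ENNReal.ofReal_le_ofReal ?_))
      rw [Real.mul_rpow (by norm_num) h0.le, ← mul_assoc]
      gcongr
      rw [hC]
      linarith
    · calc m (Metric.closedBall z ρ) ≤ m univ := measure_mono (subset_univ _)
        _ = ENNReal.ofReal (m.real univ) := by rw [ofReal_measureReal]
        _ ≤ ENNReal.ofReal (C * ρ ^ D) := by
            refine ENNReal.ofReal_le_ofReal ?_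
            have h2 : 1 ≤ (2 / r₀ * ρ) ^ D := by
              refine Real.one_le_rpow ?_ hD.le
              rw [div_mul_eq_mul_div, one_le_div hr₀]
              exact h1.le
            calc m.real univ ≤ m.real univ * (2 / r₀ * ρ) ^ D := le_mul_of_one_le_right hM h2
              _ = m.real univ * (2 / r₀) ^ D * ρ ^ D := by
                  rw [Real.mul_rpow (by positivity) h0.le]; ring
              _ ≤ C * ρ ^ D := by gcongr; rw [hC]; linarith

/-- Regular measures of the same dimension cannot increase too much under the inverse of a
Lipschitz map. -/
theorem measure_le_mul_measure_image {Z₁ Z₂ : Type*} [MetricSpace Z₁] [MeasurableSpace Z₁]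
    [MetricSpace Z₂] [MeasurableSpace Z₂] [BorelSpace Z₂] [SecondCountableTopology Z₂]
    {m₁ : Measure Z₁} {m₂ : Measure Z₂} [IsFiniteMeasure m₂] {D C L : ℝ} (hC : 0 < C)
    (hL : 0 < L) (h₁ : IsRegularWith m₁ D C) (h₂ : IsRegularWith m₂ D C) {φ : Z₁ → Z₂}
    {A : Set Z₁} (hφ : ∀ a ∈ A, ∀ b ∈ A, dist a b ≤ L * dist (φ a) (φ b)) :
    m₁ A ≤ ENNReal.ofReal (C * C * (5 * L) ^ D) * m₂ (φ '' A) := by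
  have key : ∀ O : Set Z₂, IsOpen O → φ '' A ⊆ O →
      m₁ A ≤ ENNReal.ofReal (C * C * (5 * L) ^ D) * m₂ O := by
    intro O hO hAO
    have hrad : ∀ a ∈ A, ∃ ρ : ℝ, 0 < ρ ∧ ρ ≤ 1 ∧ Metric.ball (φ a) ρ ⊆ O := by
      intro a ha
      obtain ⟨e, he, hball⟩ := Metric.isOpen_iff.1 hO (φ a) (hAO ⟨a, ha, rfl⟩)
      exact ⟨min e 1, lt_min he one_pos, min_le_right _ _,
        (Metric.ball_subset_ball (min_le_left _ _)).trans hball⟩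
    choose! ρ hρ0 hρ1 hρO using hrad
    obtain ⟨u, huA, hud, hucov⟩ := Vitali.exists_disjoint_subfamily_covering_enlargement_ball
      A φ ρ 1 hρ1 5 (by norm_num)
    have hcount : u.Countable := hud.countable_of_isOpen (fun a _ => Metric.isOpen_ball)
      fun a ha => ⟨φ a, Metric.mem_ball_self (hρ0 a (huA ha))⟩
    have hcov : A ⊆ ⋃ b ∈ u, Metric.closedBall b (5 * L * ρ b) := by
      intro a ha
      obtain ⟨b, hb, hab⟩ := hucov a ha
      refine mem_biUnion hb ?_
      have h1 := hab (Metric.mem_ball_self (hρ0 a ha))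
      rw [Metric.mem_ball] at h1
      rw [Metric.mem_closedBall]
      calc dist a b ≤ L * dist (φ a) (φ b) := hφ a ha b (huA hb)
        _ ≤ L * (5 * ρ b) := by gcongr
        _ = 5 * L * ρ b := by ring
    calc m₁ A ≤ ∑' b : u, m₁ (Metric.closedBall (b : Z₁) (5 * L * ρ b)) :=
          (measure_mono hcov).trans (measure_biUnion_le _ hcount _)
      _ ≤ ∑' b : u, ENNReal.ofReal (C * C * (5 * L) ^ D) * m₂ (Metric.ball (φ b) (ρ b)) := by
          refine ENNReal.tsum_le_tsum fun b => ?_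
          have hb0 := hρ0 b (huA b.2)
          calc m₁ (Metric.closedBall (b : Z₁) (5 * L * ρ b))
              ≤ ENNReal.ofReal (C * (5 * L * ρ b) ^ D) := h₁.2 _ _ (by positivity)
            _ = ENNReal.ofReal (C * C * (5 * L) ^ D) * ENNReal.ofReal (C⁻¹ * ρ b ^ D) := by
                rw [← ENNReal.ofReal_mul (by positivity), Real.mul_rpow (by positivity) hb0.le]
                congr 1
                field_simp
            _ ≤ _ := by
                gcongr
                exact h₂.1 _ _ hb0 (hρ1 b (huA b.2))
      _ = ENNReal.ofReal (C * C * (5 * L) ^ D) * m₂ (⋃ b ∈ u, Metric.ball (φ b) (ρ b)) := by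
          rw [ENNReal.tsum_mul_left, measure_biUnion hcount hud fun b _ => measurableSet_ball]
      _ ≤ ENNReal.ofReal (C * C * (5 * L) ^ D) * m₂ O := by
          gcongr
          exact iUnion₂_subset fun b hb => hρO b (huA hb)
  have h0 : ENNReal.ofReal (C * C * (5 * L) ^ D) ≠ 0 := by
    rw [Ne, ENNReal.ofReal_eq_zero, not_le]; positivity
  rw [Set.measure_eq_iInf_isOpen (φ '' A) m₂]
  simp only [ENNReal.mul_iInf_of_ne h0 ENNReal.ofReal_ne_top]
  exact le_iInf fun O => le_iInf fun hAO => le_iInf fun hO => key O hO hAO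

section Rectangles

variable {ι : Type*} [Fintype ι] {W : ι → Type*} [∀ i, MetricSpace (W i)]
  [∀ i, MeasurableSpace (W i)] {η : ∀ i, Measure (W i)} [∀ i, SigmaFinite (η i)]
  {δ : ι → ℝ} {C : ℝ}

theorem le_pi_rectangle (hC : 0 < C) (hη : ∀ i, IsRegularWith (η i) (δ i) C) (y : ∀ i, W i)
    {a : ι → ℝ} (ha0 : ∀ i, 0 < a i) (ha1 : ∀ i, a i ≤ 1) :
    ENNReal.ofReal ((C ^ Fintype.card ι)⁻¹ * ∏ i, a i ^ δ i) ≤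
      Measure.pi η (univ.pi fun i => Metric.ball (y i) (a i)) := by
  rw [Measure.pi_pi, ← Finset.card_univ, ← inv_pow, ← Finset.prod_const,
    ← Finset.prod_mul_distrib, ENNReal.ofReal_prod_of_nonneg fun i _ => by
      have := ha0 i; positivity]
  exact Finset.prod_le_prod' fun i _ => (hη i).1 _ _ (ha0 i) (ha1 i)

theorem pi_rectangle_le (hC : 0 < C) (hη : ∀ i, IsRegularWith (η i) (δ i) C) (y : ∀ i, W i)
    {a : ι → ℝ} (ha0 : ∀ i, 0 < a i) :
    Measure.pi η (univ.pi fun i => Metric.closedBall (y i) (a i)) ≤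
      ENNReal.ofReal (C ^ Fintype.card ι * ∏ i, a i ^ δ i) := by
  rw [Measure.pi_pi, ← Finset.card_univ, ← Finset.prod_const,
    ← Finset.prod_mul_distrib, ENNReal.ofReal_prod_of_nonneg fun i _ => by
      have := ha0 i; positivity]
  exact Finset.prod_le_prod' fun i _ => (hη i).2 _ _ (ha0 i)

theorem isRegularWith_pi (hC : 0 < C) (hη : ∀ i, IsRegularWith (η i) (δ i) C) :
    IsRegularWith (Measure.pi η) (∑ i, δ i) (C ^ Fintype.card ι) := by
  refine ⟨fun z ρ h0 h1 => ?_, fun z ρ h0 => ?_⟩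
  · rw [ball_pi _ h0, Real.rpow_sum_of_pos h0]
    exact le_pi_rectangle hC hη z (fun _ => h0) fun _ => h1
  · rw [closedBall_pi _ h0.le, Real.rpow_sum_of_pos h0]
    exact pi_rectangle_le hC hη z fun _ => h0

end Rectangles

/-- A map which is bi-Lipschitz with constant `L` at distances smaller than `ε`, and whose local
inverses are defined on balls of radius `ε`. -/
structure IsLocallyBilipschitz {Z₁ Z₂ : Type*} [MetricSpace Z₁] [MetricSpace Z₂] (φ : Z₁ → Z₂)
    (L ε : ℝ) : Prop where
  dist_image_le : ∀ x y, dist x y < ε → dist (φ x) (φ y) ≤ L * dist x y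
  dist_le : ∀ x y, dist x y < ε → dist x y ≤ L * dist (φ x) (φ y)
  exists_preimage : ∀ y z, dist z (φ y) < ε → ∃ x, φ x = z ∧ dist x y ≤ L * dist z (φ y)

section LocallyBilipschitz

variable {Z₁ Z₂ : Type*} [MetricSpace Z₁] [MetricSpace Z₂] {φ : Z₁ → Z₂} {L ε : ℝ}

theorem IsLocallyBilipschitz.continuous (h : IsLocallyBilipschitz φ L ε) (hL : 0 < L)
    (hε : 0 < ε) : Continuous φ := by
  refine Metric.continuous_iff.2 fun y η hη => ⟨min ε (η / L), by positivity, fun x hx => ?_⟩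
  calc dist (φ x) (φ y) ≤ L * dist x y := h.dist_image_le x y (hx.trans_le (min_le_left _ _))
    _ < L * (η / L) := by gcongr; exact hx.trans_le (min_le_right _ _)
    _ = η := by field_simp

theorem IsLocallyBilipschitz.isOpenMap (h : IsLocallyBilipschitz φ L ε) (hL : 0 < L)
    (hε : 0 < ε) : IsOpenMap φ := by
  refine fun O hO => Metric.isOpen_iff.2 ?_
  rintro _ ⟨y, hy, rfl⟩
  obtain ⟨η, hη, hO⟩ := Metric.isOpen_iff.1 hO y hy
  refine ⟨min ε (η / L), by positivity, fun z hz => ?_⟩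
  obtain ⟨x, rfl, hx⟩ := h.exists_preimage y z (lt_of_lt_of_le hz (min_le_left _ _))
  refine ⟨x, hO ?_, rfl⟩
  calc dist x y ≤ L * dist (φ x) (φ y) := hx
    _ < L * (η / L) := by gcongr; exact lt_of_lt_of_le hz (min_le_right _ _)
    _ = η := by field_simp

theorem IsLocallyBilipschitz.injOn (h : IsLocallyBilipschitz φ L ε) {A : Set Z₁}
    (hA : ∀ a ∈ A, ∀ b ∈ A, dist a b < ε) : InjOn φ A := by
  intro a ha b hb hab
  have := h.dist_le a b (hA a ha b hb)
  rw [hab, dist_self, mul_zero] at this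
  exact dist_le_zero.1 this

variable [MeasurableSpace Z₁] [MeasurableSpace Z₂] {m₁ : Measure Z₁} {m₂ : Measure Z₂}
  {D C : ℝ}

theorem IsLocallyBilipschitz.measure_le_mul_measure_image [BorelSpace Z₂]
    [SecondCountableTopology Z₂] [IsFiniteMeasure m₂] (h : IsLocallyBilipschitz φ L ε)
    (hC : 0 < C) (hL : 0 < L) (h₁ : IsRegularWith m₁ D C) (h₂ : IsRegularWith m₂ D C)
    {A : Set Z₁} (hA : ∀ a ∈ A, ∀ b ∈ A, dist a b < ε) :
    m₁ A ≤ ENNReal.ofReal (C * C * (5 * L) ^ D) * m₂ (φ '' A) :=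
  _root_.measure_le_mul_measure_image hC hL h₁ h₂ fun a ha b hb => h.dist_le a b (hA a ha b hb)

theorem IsLocallyBilipschitz.measure_image_le_mul_measure [BorelSpace Z₁]
    [SecondCountableTopology Z₁] [IsFiniteMeasure m₁] (h : IsLocallyBilipschitz φ L ε)
    (hC : 0 < C) (hL : 0 < L) (h₁ : IsRegularWith m₁ D C) (h₂ : IsRegularWith m₂ D C)
    {A : Set Z₁} (hA : ∀ a ∈ A, ∀ b ∈ A, dist a b < ε) :
    m₂ (φ '' A) ≤ ENNReal.ofReal (C * C * (5 * L) ^ D) * m₁ A := by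
  rcases A.eq_empty_or_nonempty with rfl | ⟨a₀, -⟩
  · simp
  have : Nonempty Z₁ := ⟨a₀⟩
  have hinv := (h.injOn hA).leftInvOn_invFunOn
  have himage : Function.invFunOn φ A '' (φ '' A) = A := hinv.image_image
  have key := _root_.measure_le_mul_measure_image (φ := Function.invFunOn φ A) (A := φ '' A)
    hC hL h₂ h₁ ?_
  · rwa [himage] at key
  · rintro _ ⟨a, ha, rfl⟩ _ ⟨b, hb, rfl⟩
    rw [hinv ha, hinv hb]
    exact h.dist_image_le a b (hA a ha b hb)

end LocallyBilipschitz

section EuclideanDistance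

variable {d : ℕ} {W : Fin d → Type*} [∀ i, MetricSpace (W i)]

theorem dist_le_dist2 (x y : ∀ i, W i) : dist x y ≤ dist2 x y := by
  refine (dist_pi_le_iff (Real.sqrt_nonneg _)).2 fun i => ?_
  refine Real.le_sqrt_of_sq_le ?_
  exact Finset.single_le_sum (f := fun i => dist (x i) (y i) ^ 2) (fun i _ => sq_nonneg _)
    (Finset.mem_univ i)

theorem dist2_le_mul_dist (x y : ∀ i, W i) : dist2 x y ≤ d * dist x y := by
  have hd : 0 ≤ (d : ℝ) * dist x y := by positivity
  refine Real.sqrt_le_iff.2 ⟨hd, ?_⟩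
  calc ∑ i, dist (x i) (y i) ^ 2 ≤ ∑ _i : Fin d, dist x y ^ 2 := by
        gcongr with i; exact dist_le_pi_dist x y i
    _ = d * dist x y ^ 2 := by simp
    _ ≤ (d * dist x y) ^ 2 := by
        rw [mul_pow]
        gcongr
        exact_mod_cast Nat.le_self_pow two_ne_zero d

theorem mem_ball2_of_dist_lt (hd : 1 ≤ d) {x y : ∀ i, W i} {ε₀ : ℝ} (h : dist x y < ε₀ / d) :
    x ∈ ball2 y ε₀ :=
  (dist2_le_mul_dist x y).trans_lt (by rwa [lt_div_iff₀' (by exact_mod_cast hd)] at h)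

theorem IsLocalIsometry.isLocallyBilipschitz {Y X : Fin d → Type*} [∀ i, MetricSpace (Y i)]
    [∀ i, MetricSpace (X i)] {φ : (∀ i, Y i) → ∀ i, X i} {ε₀ : ℝ} (hd : 1 ≤ d)
    (h : IsLocalIsometry φ ε₀) : IsLocallyBilipschitz φ d (ε₀ / d) := by
  refine ⟨fun x y hxy => ?_, fun x y hxy => ?_, fun y z hz => ?_⟩
  · calc dist (φ x) (φ y) ≤ dist2 (φ x) (φ y) := dist_le_dist2 _ _
      _ = dist2 x y := (h y).2 x (mem_ball2_of_dist_lt hd hxy)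
      _ ≤ d * dist x y := dist2_le_mul_dist x y
  · calc dist x y ≤ dist2 x y := dist_le_dist2 x y
      _ = dist2 (φ x) (φ y) := ((h y).2 x (mem_ball2_of_dist_lt hd hxy)).symm
      _ ≤ d * dist (φ x) (φ y) := dist2_le_mul_dist _ _
  · obtain ⟨x, hx, rfl⟩ := (h y).1.surjOn (mem_ball2_of_dist_lt hd hz)
    refine ⟨x, rfl, ?_⟩
    calc dist x y ≤ dist2 x y := dist_le_dist2 x y
      _ = dist2 (φ x) (φ y) := ((h y).2 x hx).symm
      _ ≤ d * dist (φ x) (φ y) := dist2_le_mul_dist _ _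

theorem diam2_lt_of_dist_le {S : Set (∀ i, W i)} {η ε₀ : ℝ} (hη : 0 ≤ η) (hηε : d * η < ε₀)
    (hS : ∀ x ∈ S, ∀ y ∈ S, dist x y ≤ η) : diam2 S < ε₀ := by
  refine lt_of_le_of_lt (Real.sSup_le ?_ (by positivity)) hηε
  rintro _ ⟨x, hx, y, hy, rfl⟩
  exact (dist2_le_mul_dist x y).trans (by gcongr; exact hS x hx y hy)

end EuclideanDistance

/-- For a ball of radius `r ^ A`, the exponent measuring the contribution of a coordinate in which
the larger rectangle has side `r ^ u` and the smaller one has side `r ^ v`. -/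
def sideProfile (u : ℝ) (v : ℝ≥0∞) (A : ℝ) : ℝ :=
  min A u + if v = ⊤ then 0 else max 0 (A - v.toReal)

theorem sideProfile_le {u : ℝ} {v : ℝ≥0∞} {A : ℝ} (huv : ENNReal.ofReal u ≤ v) :
    sideProfile u v A ≤ max A 0 := by
  unfold sideProfile
  split_ifs with hv
  · rw [add_zero]
    exact (min_le_left _ _).trans (le_max_left _ _)
  · have h1 : u ≤ v.toReal := (ENNReal.ofReal_le_iff_le_toReal hv).1 huv
    rcases le_total A v.toReal with h | h
    · rw [max_eq_left (by linarith)]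
      have := min_le_left A u
      have := le_max_left A 0
      linarith
    · rw [max_eq_right (by linarith)]
      have := min_le_right A u
      have := le_max_left A 0
      linarith

section DimensionalNumber

variable {d : ℕ} {δ u : Fin d → ℝ} {v : Fin d → ℝ≥0∞}

theorem dimNumI_mul_toReal (hv : ∀ k, 0 < v k) (huv : ∀ k, ENNReal.ofReal (u k) ≤ v k)
    {i : Fin d} (hi : v i ≠ ⊤) :
    dimNumI δ u v i * (v i).toReal = ∑ k, δ k * sideProfile (u k) (v k) (v i).toReal := by
  have hpos : 0 < (v i).toReal := ENNReal.toReal_pos (hv i).ne' hi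
  rw [dimNumI, if_neg hi, Finset.sum_filter, Finset.sum_filter, Finset.sum_filter,
    ← Finset.sum_add_distrib, ← Finset.sum_add_distrib, Finset.sum_mul]
  refine Finset.sum_congr rfl fun k _ => ?_
  unfold sideProfile
  by_cases hvk : v k = ⊤
  · have h1 : ¬ v k ≤ v i := by rw [hvk, top_le_iff]; exact hi
    rw [if_neg h1, if_pos hvk, add_zero, add_zero]
    rcases lt_or_ge (v i).toReal (u k) with h2 | h2
    · simp [h2, min_eq_left h2.le]
    · rw [if_neg h2.not_gt, if_pos ⟨h2.not_gt, h1⟩, min_eq_right h2]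
      field_simp
      ring
  · have h1 : u k ≤ (v k).toReal := (ENNReal.ofReal_le_iff_le_toReal hvk).1 (huv k)
    have h2 : v k ≤ v i ↔ (v k).toReal ≤ (v i).toReal := (ENNReal.toReal_le_toReal hvk hi).symm
    rw [if_neg hvk]
    simp only [h2]
    rcases le_or_gt (v k).toReal (v i).toReal with h3 | h3
    · rw [max_eq_right (by linarith), min_eq_right (by linarith), if_neg (by linarith),
        if_pos h3, if_neg (by tauto)]
      field_simp
      ring
    · rw [max_eq_left (by linarith), if_neg (by linarith : ¬ (v k).toReal ≤ (v i).toReal)]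
      rcases lt_or_ge (v i).toReal (u k) with h4 | h4
      · rw [min_eq_left h4.le, if_pos h4, if_neg (by tauto)]
        ring
      · rw [min_eq_right h4, if_neg (by linarith), if_pos ⟨by linarith, by linarith⟩]
        field_simp
        ring

theorem dimNum_le_dimNumI (i : Fin d) : dimNum δ u v ≤ dimNumI δ u v i :=
  ciInf_le (Set.finite_range _).bddBelow i

theorem dimNum_mul_toReal_le (hv : ∀ k, 0 < v k) (huv : ∀ k, ENNReal.ofReal (u k) ≤ v k)
    {i : Fin d} (hi : v i ≠ ⊤) :
    dimNum δ u v * (v i).toReal ≤ ∑ k, δ k * sideProfile (u k) (v k) (v i).toReal := by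
  rw [← dimNumI_mul_toReal hv huv hi]
  gcongr
  exact dimNum_le_dimNumI i

/-- The dimensional number is at most the dimension of the factors in which the small rectangles
have a finite exponent. -/
theorem dimNum_le_sum (hd : 1 ≤ d) (hδ : ∀ k, 0 < δ k) (hv : ∀ k, 0 < v k)
    (huv : ∀ k, ENNReal.ofReal (u k) ≤ v k) :
    dimNum δ u v ≤ ∑ k, if v k = ⊤ then 0 else δ k := by
  by_cases htop : ∃ i, v i = ⊤
  · obtain ⟨i, hi⟩ := htop
    refine (dimNum_le_dimNumI i).trans ?_
    rw [dimNumI, if_pos hi, Finset.sum_filter]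
    refine (Finset.sum_congr rfl fun k _ => ?_).le
    by_cases h : v k = ⊤ <;> simp [h]
  · push Not at htop
    have hpos : 0 < (v ⟨0, hd⟩).toReal := ENNReal.toReal_pos (hv _).ne' (htop _)
    refine le_of_mul_le_mul_right ?_ hpos
    refine (dimNum_mul_toReal_le hv huv (htop _)).trans ?_
    rw [Finset.sum_mul]
    refine Finset.sum_le_sum fun k _ => ?_
    rw [if_neg (htop k)]
    have := hδ k
    gcongr
    exact (sideProfile_le (huv k)).trans_eq (max_eq_left hpos.le)

theorem dimNum_le_sum_univ (hd : 1 ≤ d) (hδ : ∀ k, 0 < δ k) (hv : ∀ k, 0 < v k)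
    (huv : ∀ k, ENNReal.ofReal (u k) ≤ v k) : dimNum δ u v ≤ ∑ k, δ k := by
  refine (dimNum_le_sum hd hδ hv huv).trans (Finset.sum_le_sum fun k _ => ?_)
  split_ifs
  · exact (hδ k).le
  · exact le_rfl

theorem sideProfile_concave {u : ℝ} {v : ℝ≥0∞} {a b s t : ℝ}
    (hs : 0 ≤ s) (ht : 0 ≤ t) (hst : s + t = 1) (hab : a ≤ b)
    (h : v ≠ ⊤ → v.toReal ≤ a ∨ b ≤ v.toReal) :
    s * sideProfile u v a + t * sideProfile u v b ≤ sideProfile u v (s * a + t * b) := by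
  have hmin : s * min a u + t * min b u ≤ min (s * a + t * b) u := by
    refine le_min ?_ ?_
    · gcongr <;> exact min_le_left _ _
    · calc s * min a u + t * min b u ≤ s * u + t * u := by gcongr <;> exact min_le_right _ _
        _ = u := by rw [← add_mul, hst, one_mul]
  unfold sideProfile
  split_ifs with hv
  · linarith
  · obtain rfl : s = 1 - t := by linarith
    have h1 : a ≤ (1 - t) * a + t * b := by nlinarith
    have h2 : (1 - t) * a + t * b ≤ b := by nlinarith
    rcases h hv with h | h
    · rw [max_eq_right (by linarith), max_eq_right (by linarith), max_eq_right (by linarith)]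
      linarith
    · rw [max_eq_left (by linarith), max_eq_left (by linarith), max_eq_left (by linarith)]
      linarith

theorem dimNum_mul_le_sum_sideProfile (hd : 1 ≤ d) (hδ : ∀ k, 0 < δ k) (hu : ∀ k, 0 < u k)
    (hv : ∀ k, 0 < v k) (huv : ∀ k, ENNReal.ofReal (u k) ≤ v k) {A : ℝ} (hA : 0 ≤ A) :
    dimNum δ u v * A ≤ ∑ k, δ k * sideProfile (u k) (v k) A := by
  have hlower : ∃ a, 0 ≤ a ∧ a ≤ A ∧
      dimNum δ u v * a ≤ ∑ k, δ k * sideProfile (u k) (v k) a ∧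
      ∀ k, v k ≠ ⊤ → (v k).toReal ≤ A → (v k).toReal ≤ a := by
    rcases (Finset.univ.filter fun k => v k ≠ ⊤ ∧ (v k).toReal ≤ A).eq_empty_or_nonempty
      with he | hne
    · refine ⟨0, le_rfl, hA, ?_, fun k hk hkA => ?_⟩
      · rw [mul_zero]
        refine Finset.sum_nonneg fun k _ => mul_nonneg (hδ k).le ?_
        unfold sideProfile
        rw [min_eq_left (hu k).le, zero_add]
        split_ifs
        · exact le_rfl
        · exact le_max_left _ _
      · have : k ∈ (Finset.univ.filter fun k => v k ≠ ⊤ ∧ (v k).toReal ≤ A) := by simp [hk, hkA]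
        simp [he] at this
    · obtain ⟨i, hi, hmax⟩ := Finset.exists_max_image _ (fun k => (v k).toReal) hne
      simp only [Finset.mem_filter, Finset.mem_univ, true_and] at hi hmax
      exact ⟨(v i).toReal, ENNReal.toReal_nonneg, hi.2, dimNum_mul_toReal_le hv huv hi.1,
        fun k hk hkA => hmax k ⟨hk, hkA⟩⟩
  obtain ⟨a, ha0, haA, ha, hak⟩ := hlower
  rcases (Finset.univ.filter fun k => v k ≠ ⊤ ∧ A < (v k).toReal).eq_empty_or_nonempty
    with he | hne
  · have hall : ∀ k, v k ≠ ⊤ → (v k).toReal ≤ a := fun k hk => hak k hk (by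
      by_contra! hkA
      have : k ∈ (Finset.univ.filter fun k => v k ≠ ⊤ ∧ A < (v k).toReal) := by simp [hk, hkA]
      simp [he] at this)
    have hstep : ∀ k, δ k * sideProfile (u k) (v k) a + (if v k = ⊤ then 0 else δ k) * (A - a) ≤
        δ k * sideProfile (u k) (v k) A := by
      intro k
      have := hδ k
      unfold sideProfile
      split_ifs with hk
      · rw [zero_mul, add_zero]
        gcongr
      · have h1 : u k ≤ (v k).toReal := (ENNReal.ofReal_le_iff_le_toReal hk).1 (huv k)
        have h2 := hall k hk
        rw [min_eq_right (by linarith), min_eq_right (by linarith), max_eq_right (by linarith),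
          max_eq_right (by linarith)]
        linarith
    calc dimNum δ u v * A = dimNum δ u v * a + dimNum δ u v * (A - a) := by ring
      _ ≤ ∑ k, δ k * sideProfile (u k) (v k) a +
          (∑ k, if v k = ⊤ then 0 else δ k) * (A - a) := by
          gcongr
          exact dimNum_le_sum hd hδ hv huv
      _ ≤ _ := by
          rw [Finset.sum_mul, ← Finset.sum_add_distrib]
          exact Finset.sum_le_sum fun k _ => hstep k
  · obtain ⟨j, hj, hmin⟩ := Finset.exists_min_image _ (fun k => (v k).toReal) hne
    simp only [Finset.mem_filter, Finset.mem_univ, true_and] at hj hmin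
    set b := (v j).toReal with hb
    have hb' := dimNum_mul_toReal_le (δ := δ) hv huv hj.1
    rw [← hb] at hb'
    have hba : 0 < b - a := by linarith [hj.2]
    set t := (A - a) / (b - a) with ht
    have ht0 : 0 ≤ t := div_nonneg (by linarith) hba.le
    have ht1 : 0 ≤ 1 - t := by
      rw [sub_nonneg, ht, div_le_one hba]
      linarith [hj.2]
    have hAt : A = (1 - t) * a + t * b := by
      have : t * (b - a) = A - a := by rw [ht]; field_simp
      linarith
    calc dimNum δ u v * A = (1 - t) * (dimNum δ u v * a) + t * (dimNum δ u v * b) := by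
          conv_lhs => rw [hAt]
          ring
      _ ≤ (1 - t) * (∑ k, δ k * sideProfile (u k) (v k) a) +
          t * ∑ k, δ k * sideProfile (u k) (v k) b := by gcongr
      _ = ∑ k, δ k * ((1 - t) * sideProfile (u k) (v k) a + t * sideProfile (u k) (v k) b) := by
          rw [Finset.mul_sum, Finset.mul_sum, ← Finset.sum_add_distrib]
          exact Finset.sum_congr rfl fun k _ => by ring
      _ ≤ ∑ k, δ k * sideProfile (u k) (v k) A := by
          refine Finset.sum_le_sum fun k _ => ?_
          have := hδ k
          conv_rhs => rw [hAt]
          gcongr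
          refine sideProfile_concave ht1 ht0 (by ring) (by linarith) fun hk => ?_
          rcases le_or_gt (v k).toReal A with h | h
          · exact Or.inl (hak k hk h)
          · exact Or.inr (hmin k ⟨hk, h⟩)

/-- Stability of the lower bound under perturbations of the exponents. -/
theorem mul_le_sum_of_near (hd : 1 ≤ d) (hδ : ∀ k, 0 < δ k) (hu : ∀ k, 0 < u k)
    (hv : ∀ k, 0 < v k) (huv : ∀ k, ENNReal.ofReal (u k) ≤ v k) {s ε A₀ A : ℝ} (hA₀ : 0 < A₀)
    (hA : A₀ ≤ A) (hs : s ≤ dimNum δ u v)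
    (hε : 4 * (∑ k, δ k) * ε ≤ (dimNum δ u v - s) * A₀) {u' v' : Fin d → ℝ}
    (hu' : ∀ k, |u' k - u k| ≤ ε) (hv' : ∀ k, v k ≠ ⊤ → v' k ≤ (v k).toReal + ε) :
    s * A ≤ ∑ k, δ k * ((u k - ε - u' k) + min A (u' k) + max 0 (A - v' k)) := by
  have hterm : ∀ k, δ k * sideProfile (u k) (v k) A - δ k * (4 * ε) ≤
      δ k * ((u k - ε - u' k) + min A (u' k) + max 0 (A - v' k)) := by
    intro k
    rw [← mul_sub]
    have := hδ k
    gcongr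
    obtain ⟨h1, h2⟩ := abs_le.1 (hu' k)
    have h3 : min A (u k) - ε ≤ min A (u' k) := by
      refine le_min ?_ ?_
      · linarith [min_le_left A (u k)]
      · linarith [min_le_right A (u k)]
    unfold sideProfile
    split_ifs with hk
    · linarith [le_max_left 0 (A - v' k)]
    · have h4 : max 0 (A - (v k).toReal) - ε ≤ max 0 (A - v' k) := by
        rw [sub_le_iff_le_add]
        refine max_le ?_ ?_
        · linarith [le_max_left 0 (A - v' k)]
        · linarith [le_max_right 0 (A - v' k), hv' k hk]
      linarith
  calc s * A ≤ dimNum δ u v * A - (dimNum δ u v - s) * A₀ := by nlinarith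
    _ ≤ ∑ k, δ k * sideProfile (u k) (v k) A - ∑ k, δ k * (4 * ε) := by
        gcongr
        · exact dimNum_mul_le_sum_sideProfile hd hδ hu hv huv (hA₀.le.trans hA)
        · rw [← Finset.sum_mul]
          linarith
    _ ≤ _ := by
        rw [← Finset.sum_sub_distrib]
        exact Finset.sum_le_sum fun k _ => hterm k

end DimensionalNumber

/-- The images under `φ` of rectangles with sides at most `κ` have, up to the factor `K`, the
measure given by the product of their sides raised to the powers `δ i`. -/
structure IsRectRegular {ι : Type*} [Fintype ι] {Y : ι → Type*} [∀ i, MetricSpace (Y i)]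
    {Z : Type*} [MeasurableSpace Z] (m : Measure Z) (φ : (∀ i, Y i) → Z) (δ : ι → ℝ)
    (κ K : ℝ) : Prop where
  le_measure : ∀ (y : ∀ i, Y i) (a : ι → ℝ), (∀ i, 0 < a i) → (∀ i, a i ≤ κ) →
    ENNReal.ofReal (K⁻¹ * ∏ i, a i ^ δ i) ≤ m (φ '' univ.pi fun i => Metric.ball (y i) (a i))
  measure_le : ∀ (y : ∀ i, Y i) (a : ι → ℝ) (S : Set (∀ i, Y i)), (∀ i, 0 < a i) →
    (∀ i, a i ≤ κ) → (S ⊆ univ.pi fun i => Metric.closedBall (y i) (a i)) →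
    m (φ '' S) ≤ ENNReal.ofReal (K * ∏ i, a i ^ δ i)

theorem pi_ball_subset_pi_closedBall {ι : Type*} {Y : ι → Type*} [∀ i, MetricSpace (Y i)]
    (y : ∀ i, Y i) (a : ι → ℝ) :
    (univ.pi fun i => Metric.ball (y i) (a i)) ⊆ univ.pi fun i => Metric.closedBall (y i) (a i) :=
  Set.pi_mono fun _ _ => Metric.ball_subset_closedBall

section RectangleImages

variable {ι : Type*} [Fintype ι] {Y : ι → Type*} [∀ i, MetricSpace (Y i)]

theorem dist_le_of_mem_pi_closedBall {y : ∀ i, Y i} {a : ι → ℝ} {κ : ℝ} (hκ : 0 ≤ κ)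
    (ha : ∀ i, a i ≤ κ) {x x' : ∀ i, Y i}
    (hx : x ∈ univ.pi fun i => Metric.closedBall (y i) (a i))
    (hx' : x' ∈ univ.pi fun i => Metric.closedBall (y i) (a i)) : dist x x' ≤ 2 * κ := by
  refine (dist_pi_le_iff (by positivity)).2 fun i => ?_
  have h1 := Metric.mem_closedBall.1 (hx i (mem_univ i))
  have h2 := Metric.mem_closedBall.1 (hx' i (mem_univ i))
  linarith [dist_triangle_right (x i) (x' i) (y i), ha i]

variable {X : ι → Type*} [∀ i, MetricSpace (X i)] [∀ i, MeasurableSpace (Y i)]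
  [∀ i, MeasurableSpace (X i)] [∀ i, BorelSpace (Y i)] [∀ i, BorelSpace (X i)]
  [∀ i, SecondCountableTopology (Y i)] [∀ i, SecondCountableTopology (X i)]
  {ν : ∀ i, Measure (Y i)} {μ : ∀ i, Measure (X i)} [∀ i, IsFiniteMeasure (ν i)]
  [∀ i, IsFiniteMeasure (μ i)] {δ : ι → ℝ} {C L ε : ℝ}

theorem IsLocallyBilipschitz.isRectRegular {φ : (∀ i, Y i) → ∀ i, X i}
    (hφ : IsLocallyBilipschitz φ L ε) (hε : 0 < ε) (hC : 0 < C) (hL : 0 < L)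
    (hν : ∀ i, IsRegularWith (ν i) (δ i) C) (hμ : ∀ i, IsRegularWith (μ i) (δ i) C) :
    IsRectRegular (Measure.pi μ) φ δ (min 1 (ε / 3))
      (C ^ Fintype.card ι * C ^ Fintype.card ι * (5 * L) ^ (∑ i, δ i) * C ^ Fintype.card ι) := by
  have hκ : 0 ≤ min 1 (ε / 3) := by positivity
  have hκε : 2 * min 1 (ε / 3) < ε := by linarith [min_le_right 1 (ε / 3)]
  set K₀ := C ^ Fintype.card ι * C ^ Fintype.card ι * (5 * L) ^ (∑ i, δ i) with hK₀
  have hK₀0 : 0 < K₀ := by positivity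
  have h1 := isRegularWith_pi hC hν
  have h2 := isRegularWith_pi hC hμ
  have hC' : 0 < C ^ Fintype.card ι := by positivity
  refine ⟨fun y a ha0 ha1 => ?_, fun y a S ha0 ha1 hS => ?_⟩
  · have key := hφ.measure_le_mul_measure_image hC' hL h1 h2
      (A := univ.pi fun i => Metric.ball (y i) (a i)) fun b hb c hc =>
        (dist_le_of_mem_pi_closedBall hκ ha1 (pi_ball_subset_pi_closedBall y a hb)
          (pi_ball_subset_pi_closedBall y a hc)).trans_lt hκε
    have h3 := (le_pi_rectangle hC hν y ha0 fun i => (ha1 i).trans (min_le_left _ _)).trans key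
    rw [← hK₀] at h3
    rw [mul_inv, mul_assoc, ENNReal.ofReal_mul (by positivity), ENNReal.ofReal_inv_of_pos hK₀0]
    refine (ENNReal.inv_mul_le_iff ?_ ENNReal.ofReal_ne_top).2 h3
    rwa [Ne, ENNReal.ofReal_eq_zero, not_le]
  · have key := hφ.measure_image_le_mul_measure hC' hL h1 h2 (A := S) fun b hb c hc =>
        (dist_le_of_mem_pi_closedBall hκ ha1 (hS hb) (hS hc)).trans_lt hκε
    refine key.trans ?_
    rw [mul_assoc K₀, ENNReal.ofReal_mul hK₀0.le, ← hK₀]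
    gcongr
    exact (measure_mono hS).trans (pi_rectangle_le hC hν y ha0)

theorem prod_mul_min_rpow_le {r A s : ℝ} {a u v : ι → ℝ} (hr0 : 0 < r) (hr1 : r ≤ 1)
    (h : s * A ≤ ∑ k, δ k * ((a k - u k) + min A (u k) + max 0 (A - v k))) :
    (∏ k, (r ^ a k) ^ δ k) * ∏ k, min (r ^ v k) (r ^ A) ^ δ k ≤
      (r ^ A) ^ (s - ∑ k, δ k) *
        ((∏ k, (r ^ v k) ^ δ k) * ∏ k, min (r ^ u k) (r ^ A) ^ δ k) := by
  have hmin : ∀ x, min (r ^ x) (r ^ A) = r ^ max x A := fun x =>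
    ((Real.antitone_rpow_of_base_le_one hr0 hr1).map_max).symm
  simp only [hmin, ← Real.rpow_mul hr0.le]
  rw [← Real.rpow_sum_of_pos hr0, ← Real.rpow_sum_of_pos hr0, ← Real.rpow_sum_of_pos hr0,
    ← Real.rpow_sum_of_pos hr0, ← Real.rpow_add hr0, ← Real.rpow_add hr0, ← Real.rpow_add hr0]
  refine Real.rpow_le_rpow_of_exponent_ge hr0 hr1 ?_
  have hk : ∀ k, δ k * ((a k - u k) + min A (u k) + max 0 (A - v k)) =
      a k * δ k + max (v k) A * δ k - v k * δ k - max (u k) A * δ k + A * δ k := by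
    intro k
    have h1 : min A (u k) = A + u k - max (u k) A := by
      rw [eq_sub_iff_add_eq, max_comm, min_add_max]
    have h2 : max 0 (A - v k) = max (v k) A - v k := by
      rw [← max_sub_sub_right, sub_self]
    rw [h1, h2]
    ring
  simp only [hk, Finset.sum_add_distrib, Finset.sum_sub_distrib, ← Finset.mul_sum] at h
  linarith

end RectangleImages

section Spread

variable {ι : Type*} [Fintype ι] {Y : ι → Type*} [∀ i, MetricSpace (Y i)] {Z : Type*}
  [MetricSpace Z] [MeasurableSpace Z] {m : Measure Z} {φ : (∀ i, Y i) → Z} {δ : ι → ℝ}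
  {L ε κ K : ℝ}

theorem prod_div_rpow {M : ℝ} (hM : 0 < M) {b : ι → ℝ} (hb : ∀ i, 0 < b i) :
    ∏ i, (b i / M) ^ δ i = (M ^ ∑ i, δ i)⁻¹ * ∏ i, b i ^ δ i := by
  rw [Real.rpow_sum_of_pos hM, ← Finset.prod_inv_distrib, ← Finset.prod_mul_distrib]
  refine Finset.prod_congr rfl fun i _ => ?_
  rw [Real.div_rpow (hb i).le hM.le]
  field_simp

theorem prod_mul_rpow {M : ℝ} (hM : 0 < M) {b : ι → ℝ} (hb : ∀ i, 0 < b i) :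
    ∏ i, (M * b i) ^ δ i = M ^ (∑ i, δ i) * ∏ i, b i ^ δ i := by
  rw [Real.rpow_sum_of_pos hM, ← Finset.prod_mul_distrib]
  exact Finset.prod_congr rfl fun i _ => Real.mul_rpow hM.le (hb i).le

/-- The mass of `R`, concentrated on the small rectangle, is spread over a ball of radius `r ^ A`
proportionally to `m`, up to the factor `(r ^ A) ^ (s - D)`. -/
theorem measure_mul_measure_ball_inter_le (hφ : IsLocallyBilipschitz φ L ε) (hL : 1 ≤ L)
    (hK : 0 < K) (hκ : 0 ≤ κ) (hκε : 2 * κ < ε) (hreg : IsRectRegular m φ δ κ K)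
    (hδ : ∀ i, 0 < δ i) {r A s : ℝ} {a u v : ι → ℝ} {ξ : ∀ i, Y i} (hr0 : 0 < r) (hr1 : r ≤ 1)
    (hu : ∀ i, r ^ u i ≤ κ) (huv : ∀ i, u i ≤ v i) {R : Set Z}
    (hR : (φ '' univ.pi fun i => Metric.ball (ξ i) (r ^ u i)) ⊆ R)
    (hRm : m R ≤ ENNReal.ofReal (K * ∏ i, (r ^ a i) ^ δ i))
    (h : s * A ≤ ∑ k, δ k * ((a k - u k) + min A (u k) + max 0 (A - v k))) (x : Z) :
    m R * m (Metric.ball x (r ^ A) ∩ φ '' univ.pi fun i => Metric.ball (ξ i) (r ^ v i / 2)) ≤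
      ENNReal.ofReal (K ^ 4 * ((2 * L) ^ ∑ i, δ i) ^ 3 * (r ^ A) ^ (s - ∑ i, δ i)) *
        m (φ '' univ.pi fun i => Metric.ball (ξ i) (r ^ v i / 2)) *
        m (R ∩ Metric.ball x (2 * r ^ A)) := by
  set P := univ.pi fun i => Metric.ball (ξ i) (r ^ v i / 2) with hP
  set ρ := r ^ A with hρ
  have hρ0 : 0 < ρ := Real.rpow_pos_of_pos hr0 A
  have hL0 : 0 < L := by linarith
  have hru : ∀ i, 0 < r ^ u i := fun i => Real.rpow_pos_of_pos hr0 _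
  have hrv : ∀ i, 0 < r ^ v i := fun i => Real.rpow_pos_of_pos hr0 _
  have hvu : ∀ i, r ^ v i ≤ r ^ u i := fun i =>
    Real.rpow_le_rpow_of_exponent_ge hr0 hr1 (huv i)
  have hvκ : ∀ i, r ^ v i ≤ κ := fun i => (hvu i).trans (hu i)
  rcases (Metric.ball x ρ ∩ φ '' P).eq_empty_or_nonempty with he | ⟨_, hwx, w, hw, rfl⟩
  · simp [he]
  set S := {w' ∈ P | φ w' ∈ Metric.ball x ρ} with hS
  have hSP : Metric.ball x ρ ∩ φ '' P = φ '' S := by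
    ext z
    constructor
    · rintro ⟨hz, w', hw', rfl⟩
      exact ⟨w', ⟨hw', hz⟩, rfl⟩
    · rintro ⟨w', ⟨hw', hz⟩, rfl⟩
      exact ⟨hz, w', hw', rfl⟩
  have hPdist : ∀ w' ∈ P, ∀ i, dist (w' i) (w i) ≤ r ^ v i := by
    intro w' hw' i
    have h1 := Metric.mem_ball.1 (hw' i (mem_univ i))
    have h2 := Metric.mem_ball.1 (hw i (mem_univ i))
    linarith [dist_triangle_right (w' i) (w i) (ξ i)]
  have hS_sub : S ⊆ univ.pi fun i => Metric.closedBall (w i) (min (r ^ v i) (2 * L * ρ)) := by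
    rintro w' ⟨hw', hz⟩ i -
    refine le_min (hPdist w' hw' i) ?_
    have h1 : dist w' w ≤ κ := (dist_pi_le_iff hκ).2 fun j => (hPdist w' hw' j).trans (hvκ j)
    calc dist (w' i) (w i) ≤ dist w' w := dist_le_pi_dist _ _ i
      _ ≤ L * dist (φ w') (φ w) := hφ.dist_le _ _ (by linarith)
      _ ≤ L * (ρ + ρ) := by
          gcongr
          exact (dist_triangle_right _ _ x).trans
            (add_le_add (Metric.mem_ball.1 hz).le (Metric.mem_ball.1 hwx).le)
      _ = 2 * L * ρ := by ring
  have hub : m (φ '' S) ≤ ENNReal.ofReal (K * ((2 * L) ^ (∑ i, δ i) *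
      ∏ i, min (r ^ v i) ρ ^ δ i)) := by
    refine (hreg.measure_le w _ S (fun i => lt_min (hrv i) (by positivity))
      (fun i => (min_le_left _ _).trans (hvκ i)) hS_sub).trans (ENNReal.ofReal_le_ofReal ?_)
    rw [← prod_mul_rpow (by positivity) fun i => lt_min (hrv i) hρ0]
    gcongr with i
    · exact (hδ i).le
    · rw [mul_min_of_nonneg _ _ (by positivity)]
      refine min_le_min_right _ (le_mul_of_one_le_left (hrv i).le (by linarith))
  have hlbP : ENNReal.ofReal (K⁻¹ * (((2 * L) ^ (∑ i, δ i))⁻¹ * ∏ i, (r ^ v i) ^ δ i)) ≤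
      m (φ '' P) := by
    refine le_trans (ENNReal.ofReal_le_ofReal ?_) (hreg.le_measure ξ (fun i => r ^ v i / 2)
      (fun i => half_pos (hrv i)) fun i => (half_le_self (hrv i).le).trans (hvκ i))
    rw [← prod_div_rpow (by positivity) hrv]
    gcongr with i
    · exact (hδ i).le
    · linarith
  have hlbR : ENNReal.ofReal (K⁻¹ * (((2 * L) ^ (∑ i, δ i))⁻¹ *
      ∏ i, min (r ^ u i) ρ ^ δ i)) ≤ m (R ∩ Metric.ball x (2 * ρ)) := by
    have hmin : ∀ i, 0 < min (r ^ u i) ρ := fun i => lt_min (hru i) hρ0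
    have hdiv : ∀ i, 0 < min (r ^ u i) ρ / (2 * L) := fun i => by have := hmin i; positivity
    have hdiv_u : ∀ i, min (r ^ u i) ρ / (2 * L) ≤ r ^ u i / 2 := fun i =>
      div_le_div₀ (hru i).le (min_le_left _ _) two_pos (by linarith)
    rw [← prod_div_rpow (by positivity) hmin]
    refine (hreg.le_measure w _ hdiv fun i => ?_).trans (measure_mono ?_)
    · exact (hdiv_u i).trans ((half_le_self (hru i).le).trans (hu i))
    · rintro _ ⟨w', hw', rfl⟩
      have hw'i : ∀ i, dist (w' i) (w i) < min (r ^ u i) ρ / (2 * L) := fun i =>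
        Metric.mem_ball.1 (hw' i (mem_univ i))
      refine ⟨hR ⟨w', fun i _ => ?_, rfl⟩, ?_⟩
      · have h2 := Metric.mem_ball.1 (hw i (mem_univ i))
        rw [Metric.mem_ball]
        linarith [dist_triangle (w' i) (w i) (ξ i), hw'i i, hdiv_u i, hvu i]
      · have h1 : dist w' w ≤ κ := (dist_pi_le_iff hκ).2 fun j =>
          (hw'i j).le.trans ((hdiv_u j).trans ((half_le_self (hru j).le).trans (hu j)))
        have h2 : dist w' w ≤ ρ / (2 * L) := (dist_pi_le_iff (by positivity)).2 fun j =>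
          (hw'i j).le.trans (by gcongr; exact min_le_right _ _)
        have h3 : dist (φ w') (φ w) ≤ ρ / 2 := by
          calc dist (φ w') (φ w) ≤ L * dist w' w := hφ.dist_image_le _ _ (by linarith)
            _ ≤ L * (ρ / (2 * L)) := by gcongr
            _ = ρ / 2 := by field_simp
        rw [Metric.mem_ball] at hwx ⊢
        linarith [dist_triangle (φ w') (φ w) x]
  rw [hSP]
  set M := (2 * L) ^ ∑ i, δ i with hM
  have hM0 : 0 < M := by positivity
  have hprod : ∀ b : ι → ℝ, (∀ i, 0 < b i) → 0 < ∏ i, b i ^ δ i := fun b hb =>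
    Finset.prod_pos fun i _ => Real.rpow_pos_of_pos (hb i) _
  have hq := prod_mul_min_rpow_le (δ := δ) hr0 hr1 h
  rw [← hρ] at hq
  have hA0 := hprod (fun i => r ^ a i) fun i => Real.rpow_pos_of_pos hr0 _
  have hV0 := hprod (fun i => r ^ v i) hrv
  have hQ0 := hprod (fun i => min (r ^ v i) ρ) fun i => lt_min (hrv i) hρ0
  have hQ'0 := hprod (fun i => min (r ^ u i) ρ) fun i => lt_min (hru i) hρ0
  set PA := ∏ i, (r ^ a i) ^ δ i
  set PV := ∏ i, (r ^ v i) ^ δ i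
  set PQ := ∏ i, min (r ^ v i) ρ ^ δ i
  set PQ' := ∏ i, min (r ^ u i) ρ ^ δ i
  set T := ρ ^ (s - ∑ i, δ i) with hT
  have hT0 : 0 < T := Real.rpow_pos_of_pos hρ0 _
  calc m R * m (φ '' S) ≤ ENNReal.ofReal (K * PA) * ENNReal.ofReal (K * (M * PQ)) := by gcongr
    _ = ENNReal.ofReal (K ^ 2 * M * (PA * PQ)) := by
        rw [← ENNReal.ofReal_mul (by positivity)]; congr 1; ring
    _ ≤ ENNReal.ofReal (K ^ 2 * M * (T * (PV * PQ'))) := by gcongr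
    _ = ENNReal.ofReal (K ^ 4 * M ^ 3 * T) * ENNReal.ofReal (K⁻¹ * (M⁻¹ * PV)) *
        ENNReal.ofReal (K⁻¹ * (M⁻¹ * PQ')) := by
        rw [← ENNReal.ofReal_mul (by positivity), ← ENNReal.ofReal_mul (by positivity)]
        congr 1
        field_simp
    _ ≤ _ := by gcongr

/-- The spreading condition at all scales, once the diameter of `R` is at most `r ^ A₀` and the
exponents are favourable at scales smaller than `r ^ A₀`. -/
theorem measure_mul_measure_ball_inter_le_of_diam_le (hφ : IsLocallyBilipschitz φ L ε)
    (hL : 1 ≤ L) (hK : 0 < K) (hκ : 0 ≤ κ) (hκε : 2 * κ < ε) (hreg : IsRectRegular m φ δ κ K)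
    (hδ : ∀ i, 0 < δ i) {r A₀ s C : ℝ} {a u v : ι → ℝ} {ξ : ∀ i, Y i} (hr0 : 0 < r) (hr1 : r < 1)
    (hu : ∀ i, r ^ u i ≤ κ) (huv : ∀ i, u i ≤ v i) {R : Set Z}
    (hR : (φ '' univ.pi fun i => Metric.ball (ξ i) (r ^ u i)) ⊆ R)
    (hRm : m R ≤ ENNReal.ofReal (K * ∏ i, (r ^ a i) ^ δ i))
    (hRd : ∀ z ∈ R, ∀ z' ∈ R, dist z z' ≤ r ^ A₀) (hs : s ≤ ∑ i, δ i)
    (hC : K ^ 4 * ((2 * L) ^ ∑ i, δ i) ^ 3 ≤ C) (hC1 : 1 ≤ C)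
    (h : ∀ A ≥ A₀, s * A ≤ ∑ k, δ k * ((a k - u k) + min A (u k) + max 0 (A - v k)))
    (x : Z) (ρ : ℝ) (hρ0 : 0 < ρ) (hρ1 : ρ ≤ 1) :
    m R * m (Metric.ball x ρ ∩ φ '' univ.pi fun i => Metric.ball (ξ i) (r ^ v i / 2)) ≤
      ENNReal.ofReal (C * ρ ^ (s - ∑ i, δ i)) *
        m (φ '' univ.pi fun i => Metric.ball (ξ i) (r ^ v i / 2)) *
        m (R ∩ Metric.ball x (2 * ρ)) := by
  have hρA : r ^ Real.logb r ρ = ρ := Real.rpow_logb hr0 hr1.ne hρ0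
  rcases le_or_gt A₀ (Real.logb r ρ) with hA | hA
  · have key := measure_mul_measure_ball_inter_le hφ hL hK hκ hκε hreg hδ hr0 hr1.le hu huv hR hRm
      (h _ hA) x
    rw [hρA] at key
    refine key.trans ?_
    gcongr
  · have hlt : r ^ A₀ < ρ := by
      rw [← hρA]
      exact Real.rpow_lt_rpow_of_exponent_gt hr0 hr1 hA
    rcases (Metric.ball x ρ ∩
      φ '' univ.pi fun i => Metric.ball (ξ i) (r ^ v i / 2)).eq_empty_or_nonempty with he | ⟨_, hzx, w, hw, rfl⟩
    · simp [he]
    have hwR : φ w ∈ R := by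
      refine hR ⟨w, fun i hi => Metric.ball_subset_ball ?_ (hw i hi), rfl⟩
      have h1 : r ^ v i ≤ r ^ u i := Real.rpow_le_rpow_of_exponent_ge hr0 hr1.le (huv i)
      linarith [Real.rpow_pos_of_pos hr0 (v i)]
    have hRsub : R ∩ Metric.ball x (2 * ρ) = R := by
      refine inter_eq_left.2 fun z hz => ?_
      rw [Metric.mem_ball] at hzx ⊢
      linarith [dist_triangle z (φ w) x, hRd z hz _ hwR]
    have hone : 1 ≤ ENNReal.ofReal (C * ρ ^ (s - ∑ i, δ i)) := by
      rw [ENNReal.one_le_ofReal]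
      exact one_le_mul_of_one_le_of_one_le hC1
        (Real.one_le_rpow_of_pos_of_le_one_of_nonpos hρ0 hρ1 (by linarith))
    rw [hRsub, mul_comm]
    gcongr
    exact (measure_mono inter_subset_right).trans (le_mul_of_one_le_left zero_le hone)

end Spread

theorem exists_finset_measure_biUnion_le_two_mul {Z : Type*} [MeasurableSpace Z] (m : Measure Z)
    [IsFiniteMeasure m] (R : ℕ → Set Z) (u : Set ℕ) :
    ∃ J : Finset ℕ, (J : Set ℕ) ⊆ u ∧ m (⋃ n ∈ u, R n) ≤ 2 * m (⋃ n ∈ J, R n) := by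
  classical
  rcases eq_or_ne (m (⋃ n ∈ u, R n)) 0 with h0 | h0
  · exact ⟨∅, by simp, by simp [h0]⟩
  let J : ℕ → Finset ℕ := fun k => (Finset.range k).filter (· ∈ u)
  have hJ : ⋃ n ∈ u, R n = ⋃ k, ⋃ n ∈ J k, R n := by
    ext x
    simp only [mem_iUnion, exists_prop, J, Finset.mem_filter, Finset.mem_range]
    constructor
    · rintro ⟨n, hn, hx⟩
      exact ⟨n + 1, n, ⟨n.lt_succ_self, hn⟩, hx⟩
    · rintro ⟨_, n, ⟨-, hn⟩, hx⟩
      exact ⟨n, hn, hx⟩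
  have hmono : Monotone fun k => ⋃ n ∈ J k, R n := by
    intro k l hkl
    refine biUnion_subset_biUnion_left fun n hn => ?_
    exact Finset.filter_subset_filter _ (Finset.range_mono hkl) hn
  have hlt := ENNReal.half_lt_self h0 (measure_ne_top m _)
  conv_rhs at hlt => rw [hJ, hmono.measure_iUnion]
  obtain ⟨k, hk⟩ := lt_iSup_iff.1 hlt
  refine ⟨J k, fun n hn => (Finset.mem_filter.1 hn).2, ?_⟩
  rw [← ENNReal.div_le_iff' two_ne_zero ENNReal.ofNat_ne_top]
  exact hk.le

theorem tendsto_rpow_nhds_zero {r : ℕ → ℝ} (hr0 : Tendsto r atTop (nhds 0)) {a : ℝ} (ha : 0 < a) :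
    Tendsto (fun n => r n ^ a) atTop (nhds 0) := by
  have := hr0.rpow_const (p := a) (Or.inr ha.le)
  rwa [Real.zero_rpow ha.ne'] at this

section Filling

variable {ι : Type*} [Fintype ι] {Y : ι → Type*} [∀ i, MetricSpace (Y i)] {Z : Type*}
  [MetricSpace Z] {g : (∀ i, Y i) → Z} {δ a : ι → ℝ} {L ε κ K : ℝ}

/-- In a chart, intersecting images of rectangles of comparable size are contained in the image of
an enlargement of either of them. -/
theorem IsLocallyBilipschitz.image_subset_of_inter_nonempty (hg : IsLocallyBilipschitz g L ε)
    (hε : 0 < ε) (ha : ∀ i, 0 < a i) {y y' : ∀ i, Y i} {t t' : ℝ} (ht : 0 < t) (ht' : 0 < t')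
    (htt' : t ≤ 2 * t') (hyy' : dist y y' ≤ ε / 4) (htε : ∀ i, t ^ a i ≤ ε / 8)
    (htε' : ∀ i, t' ^ a i ≤ ε / 8)
    (h : ((g '' univ.pi fun i => Metric.closedBall (y i) (t ^ a i)) ∩
      g '' univ.pi fun i => Metric.closedBall (y' i) (t' ^ a i)).Nonempty) :
    (g '' univ.pi fun i => Metric.closedBall (y i) (t ^ a i)) ⊆
      g '' univ.pi fun i => Metric.closedBall (y' i) ((1 + 2 * 2 ^ a i) * t' ^ a i) := by
  obtain ⟨_, ⟨x, hx, rfl⟩, ⟨x', hx', hxx'⟩⟩ := h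
  have hx1 : ∀ i, dist (x i) (y i) ≤ t ^ a i := fun i => hx i (mem_univ i)
  have hx2 : ∀ i, dist (x' i) (y' i) ≤ t' ^ a i := fun i => hx' i (mem_univ i)
  have hdist : dist x' x < ε := by
    refine lt_of_le_of_lt ((dist_pi_le_iff (by positivity : 0 ≤ ε / 2)).2 fun i => ?_)
      (by linarith)
    have h1 := dist_le_pi_dist y y' i
    have h2 := dist_triangle (x' i) (y' i) (x i)
    have h3 := dist_triangle (y' i) (y i) (x i)
    rw [dist_comm (y' i) (y i), dist_comm (y i) (x i)] at h3
    linarith [hx1 i, hx2 i, htε i, htε' i]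
  obtain rfl : x' = x := by
    have := hg.dist_le x' x hdist
    rw [hxx', dist_self, mul_zero] at this
    exact dist_le_zero.1 this
  refine image_mono fun z hz i _ => ?_
  have hz1 : dist (z i) (y i) ≤ t ^ a i := hz i (mem_univ i)
  have ht2 : t ^ a i ≤ 2 ^ a i * t' ^ a i := by
    rw [← Real.mul_rpow two_pos.le ht'.le]
    exact Real.rpow_le_rpow ht.le htt' (ha i).le
  rw [Metric.mem_closedBall]
  have h1 := dist_triangle (z i) (x' i) (y' i)
  have h2 := dist_triangle_right (z i) (x' i) (y i)
  linarith [hx1 i, hx2 i]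

variable [∀ i, CompactSpace (Y i)] [MeasurableSpace Z] [BorelSpace Z] {m : Measure Z}
  [IsFiniteMeasure m]

/-- A family of images of rectangles which covers almost every point infinitely often fills a fixed
proportion of every open set with finitely many disjoint members. -/
theorem exists_disjoint_filling (hg : IsLocallyBilipschitz g L ε) (hL : 0 < L) (hε : 0 < ε)
    (hκ : 0 < κ) (hK : 0 < K) (hreg : IsRectRegular m g δ κ K) (ha : ∀ i, 0 < a i)
    {r : ℕ → ℝ} (hr : ∀ n, 0 < r n) (hr0 : Tendsto r atTop (nhds 0)) {y : ℕ → ∀ i, Y i}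
    {R : ℕ → Set Z}
    (hR : ∀ n, R n = g '' univ.pi fun i => Metric.closedBall (y n i) (r n ^ a i))
    (hdiam : ∀ η > 0, ∀ᶠ n in atTop, ∀ x ∈ R n, ∀ y ∈ R n, dist x y ≤ η)
    (hcover : ∀ᵐ x ∂m, ∃ᶠ n in atTop, x ∈ R n) :
    ∃ c : ℝ≥0∞, 0 < c ∧ ∀ G : Set Z, IsOpen G → ∀ N : ℕ, ∃ J : Finset ℕ,
      (∀ n ∈ J, N ≤ n ∧ R n ⊆ G) ∧ (J : Set ℕ).PairwiseDisjoint R ∧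
        c * m G ≤ m (⋃ n ∈ J, R n) := by
  have hclosed : ∀ n, IsClosed (R n) := fun n => by
    rw [hR]
    exact ((isCompact_univ_pi fun i => isCompact_closedBall _ _).image
      (hg.continuous hL hε)).isClosed
  obtain ⟨t, -, htfin, htcov⟩ := (isCompact_univ (X := ∀ i, Y i)).finite_cover_balls
    (by positivity : 0 < ε / 8)
  set h : ι → ℝ := fun i => 1 + 2 * 2 ^ a i with hh
  have hh0 : ∀ i, 0 < h i := fun i => by positivity
  have hh1 : ∀ i, 1 ≤ h i := fun i => by
    have : (0 : ℝ) < 2 ^ a i := by positivity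
    simp only [hh]
    linarith
  set H : ℝ := K ^ 2 * ∏ i, h i ^ δ i with hH
  have hprod_h : 0 < ∏ i, h i ^ δ i := Finset.prod_pos fun i _ => Real.rpow_pos_of_pos (hh0 i) _
  have hH0 : 0 < H := by positivity
  have hsmall : ∀ᶠ n in atTop, ∀ i, r n ^ a i ≤ ε / 8 ∧ h i * r n ^ a i ≤ κ := by
    refine eventually_all.2 fun i => ?_
    have hlim := tendsto_rpow_nhds_zero hr0 (ha i)
    have hlim' := hlim.const_mul (h i)
    rw [mul_zero] at hlim'
    filter_upwards [hlim.eventually_le_const (by positivity : 0 < ε / 8),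
      hlim'.eventually_le_const hκ] with n h1 h2 using ⟨h1, h2⟩
  obtain ⟨n₁, hn₁⟩ := eventually_atTop.1
    (hsmall.and (hr0.eventually_le_const (zero_lt_one (α := ℝ))))
  set k : ℝ≥0∞ := (htfin.toFinset.card : ℝ≥0∞) + 1 with hk
  have hk0 : k ≠ 0 := by simp [hk]
  have hktop : k ≠ ⊤ := by simp [hk]
  set c := (k * (ENNReal.ofReal H * 2))⁻¹ with hc
  have hcprod : k * (ENNReal.ofReal H * 2) ≠ ⊤ := by finiteness
  refine ⟨c, ENNReal.inv_pos.2 hcprod, fun G hG N => ?_⟩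
  let T : (∀ i, Y i) → Set ℕ := fun z => {n | max N n₁ ≤ n ∧ R n ⊆ G ∧ dist (y n) z < ε / 8}
  have hGcov : m G ≤ ∑ z ∈ htfin.toFinset, m (⋃ n ∈ T z, R n) := by
    refine le_trans (measure_mono_ae ?_) (measure_biUnion_finset_le _ _)
    filter_upwards [hcover] with x hx hxG
    obtain ⟨η, hη, hball⟩ := Metric.isOpen_iff.1 hG x hxG
    obtain ⟨n, hxn, hnd, hnN⟩ := (hx.and_eventually ((hdiam (η / 2) (by positivity)).and
      (eventually_ge_atTop (max N n₁)))).exists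
    obtain ⟨z, hz, hyz⟩ := mem_iUnion₂.1 (htcov (mem_univ (y n)))
    refine mem_biUnion (x := z) (by simpa using hz) (mem_biUnion (x := n) ⟨hnN, ?_, hyz⟩ hxn)
    intro x' hx'
    exact hball ((hnd x' hx' x hxn).trans_lt (by linarith))
  rcases htfin.toFinset.eq_empty_or_nonempty with he | hne
  · rw [he, Finset.sum_empty, nonpos_iff_eq_zero] at hGcov
    exact ⟨∅, by simp, by simp, by simp [hGcov]⟩
  obtain ⟨z, -, hz⟩ := Finset.exists_max_image _ (fun z => m (⋃ n ∈ T z, R n)) hne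
  have hGz : m G ≤ k * m (⋃ n ∈ T z, R n) := by
    refine hGcov.trans ((Finset.sum_le_card_nsmul _ _ _ hz).trans ?_)
    rw [nsmul_eq_mul]
    gcongr
    exact le_self_add
  have hRne : ∀ n, (R n).Nonempty := fun n => by
    rw [hR]
    exact ⟨g (y n), y n, fun i _ =>
      Metric.mem_closedBall_self (Real.rpow_pos_of_pos (hr n) _).le, rfl⟩
  obtain ⟨u, huT, hud, hucov⟩ := Vitali.exists_disjoint_subfamily_covering_enlargement R (T z) r 2
    one_lt_two (fun n _ => (hr n).le) 1 (fun n hn => (hn₁ n ((le_max_right _ _).trans hn.1)).2)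
    fun n _ => hRne n
  have hsub : ⋃ n ∈ T z, R n ⊆ ⋃ n ∈ u,
      g '' univ.pi fun i => Metric.closedBall (y n i) (h i * r n ^ a i) := by
    refine iUnion₂_subset fun n hn => ?_
    obtain ⟨b, hb, hnb, hrnb⟩ := hucov n hn
    refine subset_trans ?_ (subset_biUnion_of_mem hb)
    rw [hR] at hnb ⊢
    rw [hR] at hnb
    have hbT := huT hb
    have hyy : dist (y n) (y b) ≤ ε / 4 := by
      linarith [dist_triangle_right (y n) (y b) z, hn.2.2, hbT.2.2]
    exact hg.image_subset_of_inter_nonempty hε ha (hr n) (hr b) hrnb hyy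
      (fun i => ((hn₁ n ((le_max_right _ _).trans hn.1)).1 i).1)
      (fun i => ((hn₁ b ((le_max_right _ _).trans hbT.1)).1 i).1) hnb
  have henl : ∀ n ∈ u, m (g '' univ.pi fun i => Metric.closedBall (y n i) (h i * r n ^ a i)) ≤
      ENNReal.ofReal H * m (R n) := by
    intro n hn
    have hn1 := (hn₁ n ((le_max_right _ _).trans (huT hn).1)).1
    have hrn : ∀ i, 0 < r n ^ a i := fun i => Real.rpow_pos_of_pos (hr n) _
    have hprod : 0 < ∏ i, (r n ^ a i) ^ δ i :=
      Finset.prod_pos fun i _ => Real.rpow_pos_of_pos (hrn i) _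
    calc m (g '' univ.pi fun i => Metric.closedBall (y n i) (h i * r n ^ a i))
        ≤ ENNReal.ofReal (K * ∏ i, (h i * r n ^ a i) ^ δ i) :=
          hreg.measure_le (y n) _ _ (fun i => mul_pos (hh0 i) (hrn i)) (fun i => (hn1 i).2)
            subset_rfl
      _ = ENNReal.ofReal H * ENNReal.ofReal (K⁻¹ * ∏ i, (r n ^ a i) ^ δ i) := by
          rw [← ENNReal.ofReal_mul hH0.le, hH]
          congr 1
          rw [Finset.prod_congr rfl fun i _ => Real.mul_rpow (hh0 i).le (hrn i).le,
            Finset.prod_mul_distrib]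
          field_simp
      _ ≤ ENNReal.ofReal H * m (R n) := by
          gcongr
          refine (hreg.le_measure (y n) _ hrn fun i =>
            (le_mul_of_one_le_left (hrn i).le (hh1 i)).trans (hn1 i).2).trans (measure_mono ?_)
          rw [hR]
          exact image_mono (pi_ball_subset_pi_closedBall _ _)
  obtain ⟨J, hJu, hJ⟩ := exists_finset_measure_biUnion_le_two_mul m R u
  refine ⟨J, fun n hn => ?_, hud.subset hJu, ?_⟩
  · have := huT (hJu hn)
    exact ⟨(le_max_left _ _).trans this.1, this.2.1⟩
  have hfinal : m G ≤ k * (ENNReal.ofReal H * 2) * m (⋃ n ∈ J, R n) := by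
    calc m G ≤ k * m (⋃ n ∈ T z, R n) := hGz
      _ ≤ k * ∑' n : u, ENNReal.ofReal H * m (R n) := by
          gcongr
          refine (measure_mono hsub).trans ((measure_biUnion_le _ u.to_countable _).trans ?_)
          exact ENNReal.tsum_le_tsum fun n => henl n n.2
      _ = k * (ENNReal.ofReal H * m (⋃ n ∈ u, R n)) := by
          rw [ENNReal.tsum_mul_left,
            measure_biUnion u.to_countable hud fun n _ => (hclosed n).measurableSet]
      _ ≤ k * (ENNReal.ofReal H * (2 * m (⋃ n ∈ J, R n))) := by gcongr
      _ = _ := by ring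
  refine (ENNReal.inv_mul_le_iff ?_ hcprod).2 hfinal
  have : ENNReal.ofReal H ≠ 0 := by rwa [Ne, ENNReal.ofReal_eq_zero, not_le]
  exact mul_ne_zero hk0 (mul_ne_zero this two_ne_zero)

end Filling

theorem mul_rpow_le_rpow_of_log_div_le {c r u a η : ℝ} (hc : 0 < c) (hr0 : 0 < r) (hr1 : r < 1)
    (h : Real.log c / (-Real.log r) ≤ η) (ha : a ≤ u - η) : c * r ^ u ≤ r ^ a := by
  have hlog : 0 < -Real.log r := neg_pos.2 (Real.log_neg hr0 hr1)
  have hcr : c ≤ r ^ (-η) := by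
    rw [← Real.log_le_log_iff hc (Real.rpow_pos_of_pos hr0 _), Real.log_rpow hr0]
    linarith [(div_le_iff₀ hlog).1 h]
  calc c * r ^ u ≤ r ^ (-η) * r ^ u := by gcongr
    _ = r ^ (-η + u) := (Real.rpow_add hr0 _ _).symm
    _ ≤ r ^ a := Real.rpow_le_rpow_of_exponent_ge hr0 hr1.le (by linarith)

theorem eventually_le_toReal_add {v : ℕ → ℝ} {w : ℝ≥0∞} (hw : w ≠ ⊤)
    (hv : Tendsto (fun n => ENNReal.ofReal (v n)) atTop (nhds w)) {η : ℝ} (hη : 0 < η) :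
    ∀ᶠ n in atTop, v n ≤ w.toReal + η := by
  have hlt : w < ENNReal.ofReal (w.toReal + η) := by
    rw [ENNReal.lt_ofReal_iff_toReal_lt hw]
    linarith
  filter_upwards [hv.eventually_lt_const hlt] with n hn
  exact ((ENNReal.ofReal_lt_ofReal_iff (by positivity)).1 hn).le

section TransferSystem

variable {d : ℕ} {Y X : Fin d → Type*} [∀ i, MetricSpace (Y i)] [∀ i, CompactSpace (Y i)]
  [∀ i, MetricSpace (X i)] [∀ i, CompactSpace (X i)] [∀ i, MeasurableSpace (X i)]
  [∀ i, BorelSpace (X i)] [∀ i, SecondCountableTopology (X i)] {μ : ∀ i, Measure (X i)}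
  [∀ i, IsFiniteMeasure (μ i)] {δ : Fin d → ℝ}

/-- Almost every point of a limsup set of full measure lies in infinitely many of the sets. -/
theorem ae_frequently_mem_of_measure_limsup {Z : Type*} [MeasurableSpace Z] {m : Measure Z}
    [IsFiniteMeasure m] {S : ℕ → Set Z} (hS : ∀ n, MeasurableSet (S n))
    (h : m (atTop.limsup S) = m univ) : ∀ᵐ x ∂m, ∃ᶠ n in atTop, x ∈ S n := by
  have hmeas : MeasurableSet (atTop.limsup S) := .measurableSet_limsup hS
  filter_upwards [(ae_iff_measure_eq hmeas.nullMeasurableSet).2 h] with x hx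
  exact mem_limsup_iff_frequently_mem.1 hx

theorem ofReal_le_dimH_limsup_image {L ε κ K C : ℝ} (hd : 1 ≤ d) (hL : 1 ≤ L) (hκ : 0 < κ)
    (hκε : 2 * κ < ε) (hK : 0 < K) (hC : 0 < C) (hδ : ∀ i, 0 < δ i)
    (hreg : IsRegularWith (Measure.pi μ) (∑ i, δ i) C) (hm : Measure.pi μ univ ≠ 0)
    {f : ℕ → (∀ i, Y i) → ∀ i, X i} (hf : ∀ n, IsLocallyBilipschitz (f n) L ε)
    (hfreg : ∀ n, IsRectRegular (Measure.pi μ) (f n) δ κ K)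
    {g : (∀ i, Y i) → ∀ i, X i} (hg : IsLocallyBilipschitz g L ε)
    (hgreg : IsRectRegular (Measure.pi μ) g δ κ K)
    {ξ : (i : Fin d) → ℕ → Y i} {r : ℕ → ℝ} (hrpos : ∀ n, 0 < r n)
    (hr0 : Tendsto r atTop (nhds 0)) {v : Fin d → ℕ → ℝ}
    {vlim : Fin d → ℝ≥0∞} (hvlim : ∀ i, 0 < vlim i)
    (hv : ∀ i, Tendsto (fun n => ENNReal.ofReal (v i n)) atTop (nhds (vlim i)))
    {u : Fin d → ℕ → ℝ} (huv : ∀ i n, u i n ≤ v i n)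
    {ulim : Fin d → ℝ} (hulim : ∀ i, 0 < ulim i)
    (hu : ∀ i, Tendsto (u i) atTop (nhds (ulim i)))
    {c : ℕ → ℝ} (hc : ∀ n, 1 ≤ c n)
    (hclog : Tendsto (fun n => Real.log (c n) / (-Real.log (r n))) atTop (nhds 0))
    (hH : ∀ n, (∀ i, r n ^ u i n ≤ κ) → ∃ y : ∀ i, Y i,
      (f n '' univ.pi fun i => Metric.ball (ξ i n) (r n ^ u i n)) ⊆
        g '' univ.pi fun i => Metric.ball (y i) (c n * r n ^ u i n))
    (hfull : Measure.pi μ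
        (atTop.limsup fun n => f n '' univ.pi fun i => Metric.ball (ξ i n) (r n ^ u i n))
      = Measure.pi μ univ) :
    ENNReal.ofReal (dimNum δ ulim vlim) ≤
      dimH (atTop.limsup fun n => f n '' univ.pi fun i => Metric.ball (ξ i n) (r n ^ v i n)) := by
  have hL0 : 0 < L := by linarith
  have hε : 0 < ε := by linarith
  have : Nonempty (Fin d) := ⟨⟨0, hd⟩⟩
  have huvlim : ∀ k, ENNReal.ofReal (ulim k) ≤ vlim k := fun k =>
    le_of_tendsto_of_tendsto' (ENNReal.tendsto_ofReal (hu k)) (hv k) fun n =>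
      ENNReal.ofReal_le_ofReal (huv k n)
  by_contra! hdim
  obtain ⟨t', ht'1, ht'2⟩ := exists_between hdim
  set s₀ := dimNum δ ulim vlim with hs₀
  set D := ∑ i, δ i with hD
  have hD0 : 0 < D := Finset.sum_pos (fun i _ => hδ i) Finset.univ_nonempty
  have hs₀D : s₀ ≤ D := dimNum_le_sum_univ hd hδ hvlim huvlim
  have ht'top : t' ≠ ⊤ := (ht'2.trans ENNReal.ofReal_lt_top).ne
  have ht0 : 0 < t'.toReal := ENNReal.toReal_pos (bot_lt_of_lt ht'1).ne' ht'top
  have hts₀ : t'.toReal < s₀ := (ENNReal.lt_ofReal_iff_toReal_lt ht'top).1 ht'2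
  obtain ⟨s, hts, hss₀⟩ := exists_between hts₀
  obtain ⟨kmin, hkmin⟩ := Finite.exists_min ulim
  set A₀ := ulim kmin / 4 with hA₀
  have hA₀0 : 0 < A₀ := by have := hulim kmin; positivity
  have hA₀u : ∀ k, 4 * A₀ ≤ ulim k := fun k => by linarith [hkmin k]
  set e := min (2 * A₀) ((s₀ - s) * A₀ / (4 * D)) with he
  have he0 : 0 < e := lt_min (by positivity)
    (div_pos (mul_pos (by linarith) hA₀0) (by positivity))
  have he1 : e ≤ 2 * A₀ := min_le_left _ _
  have he2 : 4 * D * e ≤ (s₀ - s) * A₀ := by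
    rw [mul_comm, ← le_div_iff₀ (by positivity)]
    exact min_le_right _ _
  set a : Fin d → ℝ := fun k => ulim k - e with ha
  have haA : ∀ k, 2 * A₀ ≤ a k := fun k => by simp only [ha]; linarith [hA₀u k]
  have ha0 : ∀ k, 0 < a k := fun k => by linarith [haA k]
  have hrsmall : ∀ η > 0, ∀ᶠ n in atTop, ∀ k, r n ^ a k ≤ η := fun η hη =>
    eventually_all.2 fun k => (tendsto_rpow_nhds_zero hr0 (ha0 k)).eventually_le_const hη
  have hevent : ∀ᶠ n in atTop, (r n < 1 ∧ 2 * L * r n ^ A₀ ≤ 1) ∧ (∀ k, r n ^ a k ≤ κ) ∧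
      (∀ k, |u k n - ulim k| ≤ e / 2) ∧ (∀ k, vlim k ≠ ⊤ → v k n ≤ (vlim k).toReal + e) ∧
      Real.log (c n) / (-Real.log (r n)) ≤ e / 2 := by
    have h1 := (tendsto_rpow_nhds_zero hr0 hA₀0).const_mul (2 * L)
    rw [mul_zero] at h1
    refine ((hr0.eventually_lt_const one_pos).and (h1.eventually_le_const one_pos)).and
      ((hrsmall κ hκ).and (.and ?_ (.and ?_ (hclog.eventually_le_const (half_pos he0)))))
    · refine eventually_all.2 fun k => ?_
      filter_upwards [(hu k).eventually (Metric.closedBall_mem_nhds _ (half_pos he0))] with n hn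
      simpa [Real.dist_eq] using hn
    · refine eventually_all.2 fun k => ?_
      by_cases hk : vlim k = ⊤
      · simp [hk]
      · filter_upwards [eventually_le_toReal_add hk (hv k) he0] with n hn _ using hn
  obtain ⟨n₀, hn₀⟩ := eventually_atTop.1 hevent
  have hau : ∀ n ≥ n₀, ∀ k, a k ≤ u k n - e / 2 := fun n hn k => by
    have := abs_le.1 ((hn₀ n hn).2.2.1 k)
    simp only [ha]
    linarith
  have hru : ∀ n ≥ n₀, ∀ k, r n ^ u k n ≤ κ := fun n hn k =>
    (Real.rpow_le_rpow_of_exponent_ge (hrpos n) (hn₀ n hn).1.1.le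
      (by linarith [hau n hn k])).trans ((hn₀ n hn).2.1 k)
  have hcentre : ∀ n, ∃ y : ∀ i, Y i, n₀ ≤ n →
      (f n '' univ.pi fun i => Metric.ball (ξ i n) (r n ^ u i n)) ⊆
        g '' univ.pi fun i => Metric.closedBall (y i) (r n ^ a i) := by
    intro n
    rcases le_or_gt n₀ n with hn | hn
    · obtain ⟨y, hy⟩ := hH n (hru n hn)
      refine ⟨y, fun _ => hy.trans (image_mono (Set.pi_mono fun i _ => ?_))⟩
      refine Metric.ball_subset_closedBall.trans (Metric.closedBall_subset_closedBall ?_)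
      exact mul_rpow_le_rpow_of_log_div_le (by linarith [hc n]) (hrpos n) (hn₀ n hn).1.1
        (hn₀ n hn).2.2.2.2 (hau n hn i)
    · exact ⟨fun i => ξ i n, fun h => absurd h hn.not_ge⟩
  choose y hy using hcentre
  set R : ℕ → Set (∀ i, X i) := fun n =>
    g '' univ.pi fun i => Metric.closedBall (y n i) (r n ^ a i) with hR
  set P : ℕ → Set (∀ i, X i) := fun n =>
    f n '' univ.pi fun i => Metric.ball (ξ i n) (r n ^ v i n / 2) with hP
  have hRdist : ∀ n η, 0 ≤ η → 2 * η < ε → (∀ k, r n ^ a k ≤ η) → ∀ x ∈ R n, ∀ x' ∈ R n,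
      dist x x' ≤ L * (2 * η) := by
    rintro n η hη hηε hrη _ ⟨w, hw, rfl⟩ _ ⟨w', hw', rfl⟩
    have h1 := dist_le_of_mem_pi_closedBall hη hrη hw hw'
    exact (hg.dist_image_le w w' (h1.trans_lt hηε)).trans (by gcongr)
  have hdiam : ∀ η > 0, ∀ᶠ n in atTop, ∀ x ∈ R n, ∀ x' ∈ R n, dist x x' ≤ η := by
    intro η hη
    filter_upwards [hrsmall (min κ (η / (2 * L))) (by positivity)] with n hn x hx x' hx'
    refine (hRdist n _ (by positivity) ?_ hn x hx x' hx').trans ?_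
    · linarith [min_le_left κ (η / (2 * L))]
    · calc L * (2 * min κ (η / (2 * L))) ≤ L * (2 * (η / (2 * L))) := by
            gcongr; exact min_le_right _ _
        _ = η := by field_simp
  have hcover : ∀ᵐ x ∂Measure.pi μ, ∃ᶠ n in atTop, x ∈ R n := by
    filter_upwards [ae_frequently_mem_of_measure_limsup (fun n =>
      ((hf n).isOpenMap hL0 hε _ (isOpen_set_pi finite_univ
        fun i _ => Metric.isOpen_ball)).measurableSet) hfull] with x hx
    exact (hx.and_eventually (eventually_ge_atTop n₀)).mono fun n hn => hy n hn.2 hn.1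
  obtain ⟨q, hq0, hq⟩ := exists_disjoint_filling hg hL0 hε hκ hK hgreg ha0 hrpos hr0
    (fun _ => rfl) hdiam hcover
  have hrv : ∀ n i, 0 < r n ^ v i n := fun n i => Real.rpow_pos_of_pos (hrpos n) _
  have hvu : ∀ n ≥ n₀, ∀ i, r n ^ v i n ≤ r n ^ u i n := fun n hn i =>
    Real.rpow_le_rpow_of_exponent_ge (hrpos n) (hn₀ n hn).1.1.le (huv i n)
  set C' := K ^ 4 * ((2 * L) ^ D) ^ 3 + C + 1 with hC'
  have hC'1 : 0 < K ^ 4 * ((2 * L) ^ D) ^ 3 := by positivity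
  have hsystem : IsTransferSystem (Measure.pi μ) R P
      (fun n => f n '' univ.pi fun i => Metric.ball (ξ i n) (r n ^ v i n)) n₀ s D C' q := by
    refine ⟨fun n _ => ?_, fun n _ => ?_, fun n hn => ?_, fun n _ => ?_, fun n hn => ?_, hdiam,
      by positivity, fun x ρ hρ => ?_, fun n hn x ρ hρ0 hρ1 => ?_, hq0, hq⟩
    · exact ((isCompact_univ_pi fun i => isCompact_closedBall _ _).image
        (hg.continuous hL0 hε)).isClosed
    · exact (hf n).isOpenMap hL0 hε _ (isOpen_set_pi finite_univ fun i _ => Metric.isOpen_ball)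
    · refine subset_trans (image_mono (Set.pi_mono fun i _ => ?_)) (hy n hn)
      exact Metric.ball_subset_ball (by linarith [hvu n hn i, hrv n i])
    · refine (closure_minimal (image_mono (pi_ball_subset_pi_closedBall _ _))
        ((isCompact_univ_pi fun i => isCompact_closedBall _ _).image
          ((hf n).continuous hL0 hε)).isClosed).trans (image_mono (Set.pi_mono fun i _ => ?_))
      exact Metric.closedBall_subset_ball (half_lt_self (hrv n i))
    · have h1 := (hfreg n).le_measure (fun i => ξ i n) (fun i => r n ^ v i n / 2)
        (fun i => half_pos (hrv n i)) fun i => by linarith [hvu n hn i, hru n hn i, hrv n i]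
      refine (lt_of_lt_of_le (ENNReal.ofReal_pos.2 ?_) h1).ne'
      exact mul_pos (inv_pos.2 hK) (Finset.prod_pos fun i _ =>
        Real.rpow_pos_of_pos (half_pos (hrv n i)) _)
    · refine (measure_mono Metric.ball_subset_closedBall).trans ((hreg.2 x ρ hρ).trans ?_)
      refine ENNReal.ofReal_le_ofReal ?_
      gcongr
      linarith
    · have hn' := hn₀ n hn
      refine measure_mul_measure_ball_inter_le_of_diam_le (a := a) (A₀ := A₀) (hf n) hL hK hκ.le hκε
        (hfreg n) hδ (hrpos n) hn'.1.1 (hru n hn) (fun i => huv i n) (hy n hn) ?_ ?_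
        (by linarith) (by linarith) (by linarith) (fun A hA => ?_) x ρ hρ0 hρ1
      · exact hgreg.measure_le (y n) _ _ (fun i => Real.rpow_pos_of_pos (hrpos n) _) hn'.2.1
          subset_rfl
      · intro z hz z' hz'
        refine (hRdist n (min κ (r n ^ (2 * A₀)))
          (le_min hκ.le (Real.rpow_pos_of_pos (hrpos n) _).le) (by linarith [min_le_left κ (r n ^ (2 * A₀))]) (fun k => le_min (hn'.2.1 k) ?_)
          z hz z' hz').trans ?_
        · exact Real.rpow_le_rpow_of_exponent_ge (hrpos n) hn'.1.1.le (haA k)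
        · calc L * (2 * min κ (r n ^ (2 * A₀))) ≤ L * (2 * r n ^ (2 * A₀)) := by
                gcongr; exact min_le_right _ _
            _ = 2 * L * r n ^ A₀ * r n ^ A₀ := by
                rw [two_mul A₀, Real.rpow_add (hrpos n)]; ring
            _ ≤ 1 * r n ^ A₀ := by
                gcongr
                · exact (Real.rpow_pos_of_pos (hrpos n) _).le
                · exact hn'.1.2
            _ = r n ^ A₀ := one_mul _
      · refine mul_le_sum_of_near hd hδ hulim hvlim huvlim hA₀0 hA hss₀.le he2
          (fun k => ?_) hn'.2.2.2.1
        linarith [hn'.2.2.1 k]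
  have hle := hsystem.le_dimH_limsup hm ht0 hts (by linarith)
  rw [ENNReal.ofReal_toReal ht'top] at hle
  exact absurd hle ht'1.not_ge

end TransferSystem

/-- (Mass Transference Principle under full measure; dimension form.) -/
theorem statement11 {d : ℕ} (hd : 1 ≤ d)
    (Y X : Fin d → Type*)
    [∀ i, MetricSpace (Y i)] [∀ i, CompactSpace (Y i)]
    [∀ i, MeasurableSpace (Y i)] [∀ i, BorelSpace (Y i)]
    [∀ i, MetricSpace (X i)] [∀ i, CompactSpace (X i)]
    [∀ i, MeasurableSpace (X i)] [∀ i, BorelSpace (X i)]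
    (δ : Fin d → ℝ) (hδ : ∀ i, 0 < δ i)
    (μ : ∀ i, Measure (X i)) [∀ i, SigmaFinite (μ i)]
    (ν : ∀ i, Measure (Y i))
    (hμ : ∀ i, IsAhlfors (μ i) (δ i)) (hν : ∀ i, IsAhlfors (ν i) (δ i))
    -- the balls B_{i,n} ⊆ Y_i, of radius rₙ^{v_{i,n}}
    (ξ : (i : Fin d) → ℕ → Y i)
    (r : ℕ → ℝ) (hrpos : ∀ n, 0 < r n) (hr0 : Tendsto r atTop (nhds 0))
    (v : Fin d → ℕ → ℝ) (hvpos : ∀ i n, 0 < v i n)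
    (vlim : Fin d → ℝ≥0∞) (hvlim : ∀ i, 0 < vlim i)
    (hv : ∀ i, Tendsto (fun n => ENNReal.ofReal (v i n)) atTop (nhds (vlim i)))
    (u : Fin d → ℕ → ℝ) (hupos : ∀ i n, 0 < u i n) (huv : ∀ i n, u i n ≤ v i n)
    (ulim : Fin d → ℝ) (hulim : ∀ i, 0 < ulim i)
    (hu : ∀ i, Tendsto (u i) atTop (nhds (ulim i)))
    -- the local isometries, satisfying condition (H)
    (ε₀ : ℝ) (hε₀ : 0 < ε₀)
    (f : ℕ → (∀ i, Y i) → (∀ i, X i)) (hf : ∀ n, IsLocalIsometry (f n) ε₀)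
    (hH : ∃ c : ℕ → ℝ, (∀ n, 1 ≤ c n) ∧
      Tendsto (fun n => Real.log (c n) / (-Real.log (r n))) atTop (nhds 0) ∧
      ∃ g : (∀ i, Y i) → (∀ i, X i), IsLocalIsometry g ε₀ ∧
        ∀ (n : ℕ) (yc : ∀ i, Y i) (rad : Fin d → ℝ),
          diam2 (univ.pi fun i => Metric.ball (yc i) (rad i)) < ε₀ →
          ∃ yR : ∀ i, Y i,
            g '' (univ.pi fun i => Metric.ball (yR i) ((c n)⁻¹ * rad i)) ⊆
                f n '' (univ.pi fun i => Metric.ball (yc i) (rad i)) ∧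
              f n '' (univ.pi fun i => Metric.ball (yc i) (rad i)) ⊆
                g '' (univ.pi fun i => Metric.ball (yR i) (c n * rad i)))
    -- full measure condition
    (hfull : Measure.pi μ
        (atTop.limsup fun n => f n ''
          univ.pi fun i => Metric.ball (ξ i n) ((r n ^ v i n) ^ (u i n * δ i / v i n / δ i)))
      = Measure.pi μ univ) :
    ENNReal.ofReal (dimNum δ ulim vlim) ≤
      dimH (atTop.limsup fun n => f n ''
        univ.pi fun i => Metric.ball (ξ i n) (r n ^ v i n)) := by
  obtain ⟨c, hc, hclog, g, hg, hgH⟩ := hH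
  have : ∀ i, SecondCountableTopology (Y i) := fun i =>
    EMetric.secondCountable_of_sigmaCompact (Y i)
  have : ∀ i, SecondCountableTopology (X i) := fun i =>
    EMetric.secondCountable_of_sigmaCompact (X i)
  have : ∀ i, IsFiniteMeasure (μ i) := fun i => (hμ i).isFiniteMeasure
  have : ∀ i, IsFiniteMeasure (ν i) := fun i => (hν i).isFiniteMeasure
  choose Cμ hCμ hμreg using fun i => (hμ i).exists_isRegularWith (hδ i)
  choose Cν hCν hνreg using fun i => (hν i).exists_isRegularWith (hδ i)
  set C := 1 + ∑ i, (Cμ i + Cν i) with hC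
  have hsum : ∀ i, Cμ i + Cν i ≤ ∑ i, (Cμ i + Cν i) := fun i =>
    Finset.single_le_sum (f := fun i => Cμ i + Cν i)
      (fun j _ => (add_pos (hCμ j) (hCν j)).le) (Finset.mem_univ i)
  have hC0 : 0 < C := by
    have : 0 ≤ ∑ i, (Cμ i + Cν i) :=
      Finset.sum_nonneg fun i _ => (add_pos (hCμ i) (hCν i)).le
    linarith
  have hμC : ∀ i, IsRegularWith (μ i) (δ i) C := fun i =>
    (hμreg i).mono (hCμ i) (by linarith [hsum i, hCν i])
  have hνC : ∀ i, IsRegularWith (ν i) (δ i) C := fun i =>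
    (hνreg i).mono (hCν i) (by linarith [hsum i, hCμ i])
  have hd1 : (1 : ℝ) ≤ d := by exact_mod_cast hd
  have hd0 : (0 : ℝ) < d := by linarith
  have hε : 0 < ε₀ / d := by positivity
  have hκ : 0 < min 1 (ε₀ / d / 3) := by positivity
  have hκε : 2 * min 1 (ε₀ / d / 3) < ε₀ / d := by linarith [min_le_right 1 (ε₀ / d / 3)]
  have hpi := isRegularWith_pi hC0 hμC
  have hm : Measure.pi μ univ ≠ 0 := by
    have h1 := hpi.1 (f 0 fun i => ξ i 0) 1 one_pos le_rfl
    refine (lt_of_lt_of_le (ENNReal.ofReal_pos.2 ?_) (h1.trans (measure_mono (subset_univ _)))).ne'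
    positivity
  have hexp : ∀ i n, (r n ^ v i n) ^ (u i n * δ i / v i n / δ i) = r n ^ u i n := fun i n => by
    rw [← Real.rpow_mul (hrpos n).le]
    congr 1
    have := (hvpos i n).ne'
    have := (hδ i).ne'
    field_simp
  simp only [hexp] at hfull
  refine ofReal_le_dimH_limsup_image hd hd1 hκ hκε (by positivity) (by positivity) hδ hpi hm
    (fun n => (hf n).isLocallyBilipschitz hd)
    (fun n => ((hf n).isLocallyBilipschitz hd).isRectRegular hε hC0 hd0 hνC hμC)
    (hg.isLocallyBilipschitz hd)
    ((hg.isLocallyBilipschitz hd).isRectRegular hε hC0 hd0 hνC hμC)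
    hrpos hr0 hvlim hv huv hulim hu hc hclog (fun n hn => ?_) hfull
  obtain ⟨y, -, hy⟩ := hgH n (fun i => ξ i n) (fun i => r n ^ u i n)
    (diam2_lt_of_dist_le (η := 2 * min 1 (ε₀ / d / 3)) (by positivity)
      ((lt_div_iff₀' hd0).1 hκε) fun x hx x' hx' =>
        dist_le_of_mem_pi_closedBall hκ.le hn (pi_ball_subset_pi_closedBall _ _ hx)
          (pi_ball_subset_pi_closedBall _ _ hx'))
  exact ⟨y, hy⟩
end
end

section
/- Let (X,ρ) be a compact metric space with an Ahlfors δ₀-regular Borel measure μ. For each n ∈ ℕ let E_n ⊆ X be an open set and μ_n a Borel probability measure with μ_n(X∖E_n) = 0. Suppose there exist constants C ≥ 1 and s ≥ 0 such that (i) C⁻¹ ≤ liminf_n μ_n(B)/μ(B) ≤ limsup_n μ_n(B)/μ(B) ≤ C for every ball B ⊆ X, and (ii) μ_n(B) ≤ C·r^s for every n ∈ ℕ and every ball B ⊆ X of radius r. Then dim_H ( limsup_n E_n ) ≥ s. -/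
open Filter MeasureTheory Set Metric
open scoped ENNReal NNReal Topology

/-- Local uniformity of an eventual property upgrades to uniformity on a compact set. -/
lemma IsCompact.eventually_forall_of_local {ι Y : Type*} [TopologicalSpace Y] {K : Set Y}
    (hK : IsCompact K) {l : Filter ι} {P : ι → Y → Prop}
    (h : ∀ y ∈ K, ∃ t ∈ 𝓝[K] y, ∀ᶠ n in l, ∀ z ∈ t, P n z) :
    ∀ᶠ n in l, ∀ z ∈ K, P n z := by
  refine hK.induction_on (p := fun S => ∀ᶠ n in l, ∀ z ∈ S, P n z) (by simp) ?_ ?_ h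
  · intro S T hST hT
    exact hT.mono fun n hn z hz => hn z (hST hz)
  · intro S T hS hT
    filter_upwards [hS, hT] with n h1 h2 z hz
    exact hz.elim (h1 z) (h2 z)

/-- The mass distribution principle. -/
lemma ofReal_le_dimH_of_measure_ball_le {X : Type*} [MetricSpace X]
    [MeasurableSpace X] [BorelSpace X] (ν : Measure X) {M t : ℝ} (hM : 0 < M) (ht : 0 < t)
    (hν : ∀ (x : X) (r : ℝ), 0 < r → ν (ball x r) ≤ ENNReal.ofReal (M * r ^ t))
    {S : Set X} (hS : ν S ≠ 0) : ENNReal.ofReal t ≤ dimH S := by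
  set c : ℝ := M * 2 ^ t with hc
  have hc0 : 0 < c := by positivity
  have key : (ENNReal.ofReal c)⁻¹ • ν ≤ μH[t] := by
    refine Measure.le_hausdorffMeasure t _ 1 one_pos fun U hU => ?_
    rcases U.eq_empty_or_nonempty with rfl | ⟨x, hx⟩
    · simp
    have hfin : ediam U ≠ ∞ := ne_top_of_le_ne_top ENNReal.one_ne_top hU
    have hball : ∀ δ : ℝ, diam U < δ → U ⊆ ball x δ := fun δ hδ y hy =>
      (dist_le_diam_of_mem' hfin hy hx).trans_lt hδ
    have hdiam : ν U ≤ ENNReal.ofReal (M * (2 * diam U) ^ t) := by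
      rcases (diam_nonneg (s := U)).eq_or_lt with h0 | h0
      · have hlim : Tendsto (fun δ : ℝ => ENNReal.ofReal (M * δ ^ t)) (𝓝[>] 0)
            (𝓝 (ENNReal.ofReal (M * (2 * diam U) ^ t))) := by
          rw [← h0, mul_zero]
          refine ENNReal.tendsto_ofReal (Tendsto.const_mul _ ?_)
          exact ((Real.continuousAt_rpow_const 0 t (Or.inr ht.le)).tendsto).mono_left
            nhdsWithin_le_nhds
        refine ge_of_tendsto hlim ?_
        filter_upwards [self_mem_nhdsWithin] with δ hδ
        exact (measure_mono (hball δ (h0 ▸ hδ))).trans (hν x δ hδ)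
      · exact (measure_mono (hball _ (by linarith))).trans (hν x _ (by positivity))
    have hrw : ENNReal.ofReal (M * (2 * diam U) ^ t) = ENNReal.ofReal c * ediam U ^ t := by
      rw [Real.mul_rpow two_pos.le diam_nonneg, ← mul_assoc, ENNReal.ofReal_mul hc0.le,
        ← ENNReal.ofReal_rpow_of_nonneg diam_nonneg ht.le, Metric.diam, ENNReal.ofReal_toReal hfin]
    rw [Measure.smul_apply, smul_eq_mul]
    calc _ ≤ (ENNReal.ofReal c)⁻¹ * (ENNReal.ofReal c * ediam U ^ t) := by
          gcongr; exact hdiam.trans hrw.le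
      _ = _ := by
          rw [← mul_assoc, ENNReal.inv_mul_cancel (by simpa using hc0) ENNReal.ofReal_ne_top, one_mul]
  have hne : μH[(t.toNNReal : ℝ)] S ≠ 0 := by
    rw [Real.coe_toNNReal t ht.le]
    intro h0
    have h1 := key S
    rw [h0, Measure.smul_apply, smul_eq_mul, nonpos_iff_eq_zero, mul_eq_zero] at h1
    exact h1.elim (by simp) hS
  exact le_dimH_of_hausdorffMeasure_ne_zero hne

/-- Redistributing `lam` at scale `r` along `ν`: each point mass at `x` is replaced by the
normalized restriction of `ν` to `ball x r`. -/
lemma exists_redistribution {X : Type*} [MetricSpace X] [SecondCountableTopology X]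
    [MeasurableSpace X] [BorelSpace X] (lam ν : Measure X) [IsProbabilityMeasure lam]
    [IsProbabilityMeasure ν] {r b : ℝ} (hb : 0 < b) (hν : ∀ x, b ≤ ν.real (ball x r)) :
    ∃ lam' : Measure X, IsProbabilityMeasure lam' ∧
      (∀ S, MeasurableSet S → lam' S ≤ lam (thickening r S)) ∧
      (∀ z ρ, lam'.real (ball z ρ) ≤ lam.real (ball z (r + ρ)) * (ν.real (ball z ρ) / b)) ∧
      (∀ S, MeasurableSet S → ν S = 0 → lam' S = 0) := by
  have hpos : ∀ x, ν (ball x r) ≠ 0 := fun x h0 => by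
    have := hν x
    simp [Measure.real, h0] at this
    linarith
  have hmeas : Measurable fun x => ProbabilityTheory.cond ν (ball x r) := by
    refine Measure.measurable_of_measurable_coe _ fun S hS => ?_
    have hopen : MeasurableSet {p : X × X | dist p.2 p.1 < r} :=
      (isOpen_lt (by fun_prop) continuous_const).measurableSet
    have h1 : Measurable fun x => ν (ball x r) := measurable_measure_prodMk_left hopen
    have h2 : Measurable fun x => ν (ball x r ∩ S) :=
      measurable_measure_prodMk_left (hopen.inter (measurable_snd hS))
    simp_rw [ProbabilityTheory.cond_apply' hS]
    exact h1.inv.mul h2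
  have happly : ∀ S, MeasurableSet S → lam.bind (fun x => ProbabilityTheory.cond ν (ball x r)) S
      = ∫⁻ x, (ν (ball x r))⁻¹ * ν (ball x r ∩ S) ∂lam := fun S hS => by
    rw [Measure.bind_apply hS hmeas.aemeasurable]
    simp_rw [ProbabilityTheory.cond_apply' hS]
  have hzero : ∀ (S : Set X) x, x ∉ thickening r S → ball x r ∩ S = ∅ := fun S x hx => by
    refine eq_empty_of_forall_notMem fun y hy => hx ?_
    exact mem_thickening_iff.2 ⟨y, hy.2, by rw [dist_comm]; exact hy.1⟩
  have hbound : ∀ S, MeasurableSet S → ∀ K : ℝ≥0∞,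
      (∀ x, (ν (ball x r))⁻¹ * ν (ball x r ∩ S) ≤ K) →
      lam.bind (fun x => ProbabilityTheory.cond ν (ball x r)) S ≤ K * lam (thickening r S) := by
    intro S hS K hK
    rw [happly S hS, ← lintegral_indicator_const isOpen_thickening.measurableSet]
    refine lintegral_mono fun x => ?_
    by_cases hx : x ∈ thickening r S
    · simpa [hx] using hK x
    · simp [hx, hzero S x hx]
  have hprob : IsProbabilityMeasure (lam.bind fun x => ProbabilityTheory.cond ν (ball x r)) := by
    constructor
    rw [happly _ MeasurableSet.univ]
    simp_rw [inter_univ]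
    simp [ENNReal.inv_mul_cancel (hpos _) (measure_ne_top _ _)]
  refine ⟨_, hprob, fun S hS => ?_, fun z ρ => ?_, fun S hS h0 => ?_⟩
  · simpa using hbound S hS 1 fun x =>
      (mul_le_mul_right (measure_mono inter_subset_left) _).trans
        (ENNReal.inv_mul_cancel (hpos x) (measure_ne_top _ _)).le
  · have h1 := hbound (ball z ρ) measurableSet_ball ((ENNReal.ofReal b)⁻¹ * ν (ball z ρ)) fun x => by
      gcongr
      · rw [← ofReal_measureReal]; exact ENNReal.ofReal_le_ofReal (hν x)
      · exact inter_subset_right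
    have h2 := h1.trans (mul_le_mul_right (measure_mono (thickening_ball z r ρ)) _)
    have h3 := ENNReal.toReal_mono (by finiteness) h2
    rw [ENNReal.toReal_mul, ENNReal.toReal_mul, ENNReal.toReal_inv, ENNReal.toReal_ofReal hb.le] at h3
    refine h3.trans_eq ?_
    simp only [Measure.real]
    field_simp
  · rw [happly S hS]
    simp [measure_mono_null inter_subset_right h0]

/-- Every ball of radius `r` has `ν`-measure at most `A * r ^ s`. -/
def HasBallBound {X : Type*} [MetricSpace X] [MeasurableSpace X] (ν : Measure X) (A s : ℝ) : Prop :=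
  ∀ (x : X) (r : ℝ), 0 < r → ν.real (ball x r) ≤ A * r ^ s

lemma eventually_forall_measureReal_ball_le {X : Type*} [MetricSpace X] [CompactSpace X]
    [MeasurableSpace X] {ν : ℕ → Measure X} [∀ n, IsProbabilityMeasure (ν n)]
    {δ C r₀ : ℝ} (hδ : 0 ≤ δ) (hC : 0 ≤ C)
    (h : ∀ x r, 0 < r → r ≤ r₀ → ∀ᶠ n in atTop, (ν n).real (ball x r) ≤ C * r ^ δ)
    {a b : ℝ} (ha : 0 < a) (hb : 2 * b ≤ r₀) :
    ∀ᶠ n in atTop, ∀ (x : X), ∀ ρ ∈ Icc a b, (ν n).real (ball x ρ) ≤ C * 4 ^ δ * ρ ^ δ := by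
  have key : ∀ᶠ n in atTop, ∀ p ∈ (univ : Set X) ×ˢ Icc a b,
      (ν n).real (ball p.1 p.2) ≤ C * 4 ^ δ * p.2 ^ δ := by
    refine (isCompact_univ.prod isCompact_Icc).eventually_forall_of_local ?_
    rintro ⟨x, ρ⟩ ⟨-, hρa, hρb⟩
    simp only at hρa hρb
    have hρ : 0 < ρ := ha.trans_le hρa
    refine ⟨ball x (ρ / 2) ×ˢ Ioo (ρ / 2) (3 * ρ / 2), mem_nhdsWithin_of_mem_nhds
      (prod_mem_nhds (ball_mem_nhds _ (by linarith)) (Ioo_mem_nhds (by linarith) (by linarith))), ?_⟩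
    filter_upwards [h x (2 * ρ) (by linarith) (by linarith)] with n hn
    rintro ⟨y, σ⟩ ⟨hy, hσ1, hσ2⟩
    simp only at hy hσ1 hσ2 ⊢
    have hσ : 0 < σ := by linarith
    have hsub : ball y σ ⊆ ball x (2 * ρ) :=
      ball_subset_ball' (by linarith [mem_ball.1 hy])
    calc _ ≤ (ν n).real (ball x (2 * ρ)) := measureReal_mono hsub
      _ ≤ C * (2 * ρ) ^ δ := hn
      _ ≤ C * (4 * σ) ^ δ :=
        mul_le_mul_of_nonneg_left (Real.rpow_le_rpow (by positivity) (by linarith) hδ) hC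
      _ = _ := by rw [Real.mul_rpow (by norm_num) hσ.le]; ring
  filter_upwards [key] with n hn x ρ hρ
  exact hn (x, ρ) ⟨mem_univ _, hρ⟩

lemma eventually_forall_le_measureReal_ball {X : Type*} [MetricSpace X] [CompactSpace X]
    [MeasurableSpace X] {ν : ℕ → Measure X} [∀ n, IsProbabilityMeasure (ν n)] {r m : ℝ}
    (hr : 0 < r) (h : ∀ x, ∀ᶠ n in atTop, m ≤ (ν n).real (ball x (r / 2))) :
    ∀ᶠ n in atTop, ∀ x : X, m ≤ (ν n).real (ball x r) := by
  have key : ∀ᶠ n in atTop, ∀ x ∈ (univ : Set X), m ≤ (ν n).real (ball x r) := by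
    refine isCompact_univ.eventually_forall_of_local fun x _ => ?_
    refine ⟨ball x (r / 2), mem_nhdsWithin_of_mem_nhds (ball_mem_nhds _ (by linarith)), ?_⟩
    filter_upwards [h x] with n hn y hy
    exact hn.trans (measureReal_mono (ball_subset_ball' (by
      rw [dist_comm]; linarith [mem_ball.1 hy])))
  simpa using key

lemma eventually_mul_rpow_le {a c η : ℝ} (ha : 0 < a) (hη : 0 < η) :
    ∀ᶠ x : ℝ in 𝓝[>] 0, c * x ^ a ≤ η := by
  have h : Tendsto (fun x : ℝ => c * x ^ a) (𝓝 0) (𝓝 (c * 0 ^ a)) :=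
    ((Real.continuousAt_rpow_const 0 a (Or.inr ha.le)).tendsto).const_mul c
  rw [Real.zero_rpow ha.ne', mul_zero] at h
  exact nhdsWithin_le_nhds (h.eventually_le_const hη)

lemma mul_rpow_le_mul_rpow_of_le {B σ ρ s t m : ℝ} (hB : 0 ≤ B) (hρ : 0 < ρ) (hρσ : ρ ≤ σ)
    (hts : t ≤ s) (h : B * σ ^ (s - t) ≤ m) : B * ρ ^ s ≤ m * ρ ^ t := by
  have h1 : ρ ^ s = ρ ^ (s - t) * ρ ^ t := by rw [← Real.rpow_add hρ]; congr 1; ring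
  rw [h1, ← mul_assoc]
  gcongr
  refine le_trans ?_ h
  gcongr

/-- A measure with a ball bound of exponent `s` can be moved, at arbitrarily small scale, to a
measure living on one of the sets `E n`, almost without damage to the constant in a weaker ball
bound of exponent `t < s`. -/
lemma exists_approx_supported {X : Type*} [MetricSpace X] [CompactSpace X]
    [MeasurableSpace X] [BorelSpace X] {ν : ℕ → Measure X} [∀ n, IsProbabilityMeasure (ν n)]
    {E : ℕ → Set X} (hE : ∀ n, MeasurableSet (E n)) (hsupp : ∀ n, ν n (E n)ᶜ = 0)
    {δ s t C K b r₁ : ℝ} (ht : 0 < t) (hts : t < s) (hsδ : s ≤ δ) (hC : 0 ≤ C) (hK : 0 ≤ K)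
    (hb : 0 < b) (hr₁ : 0 < r₁) (hν : ∀ n, HasBallBound (ν n) C s)
    (hup : ∀ a > 0, ∀ᶠ n in atTop, ∀ (x : X), ∀ ρ ∈ Icc a r₁, (ν n).real (ball x ρ) ≤ K * ρ ^ δ)
    (hlow : ∀ r ∈ Ioc 0 r₁, ∀ᶠ n in atTop, ∀ x : X, b * r ^ δ ≤ (ν n).real (ball x r))
    {lam : Measure X} [IsProbabilityMeasure lam] {A m M : ℝ} (hA : 0 ≤ A) (hm : 0 < m) (hmM : m < M)
    (hlamA : HasBallBound lam A s) (hlamm : HasBallBound lam m t)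
    {ε : ℝ} (hε : 0 < ε) (N : ℕ) :
    ∃ n ≥ N, ∃ lam' : Measure X, IsProbabilityMeasure lam' ∧ lam' (E n)ᶜ = 0 ∧
      (∃ A', 0 ≤ A' ∧ HasBallBound lam' A' s) ∧ HasBallBound lam' M t ∧
      ∀ S, MeasurableSet S → lam' S ≤ lam (thickening ε S) := by
  have hst : 0 < s - t := sub_pos.2 hts
  have hs : 0 < s := ht.trans hts
  obtain ⟨σ, hσ1, hσ2, hσ⟩ : ∃ σ : ℝ, A * 2 ^ s * σ ^ (s - t) ≤ m ∧
      A * 2 ^ s * K / b * σ ^ (s - t) ≤ m ∧ 0 < σ :=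
    ((eventually_mul_rpow_le hst hm).and ((eventually_mul_rpow_le hst hm).and
      self_mem_nhdsWithin)).exists
  have hlim : ∀ᶠ r : ℝ in 𝓝[>] 0, m * (1 + r / σ) ^ t ≤ M := by
    have h : ContinuousAt (fun r : ℝ => m * (1 + r / σ) ^ t) 0 :=
      ContinuousAt.mul continuousAt_const
        (ContinuousAt.rpow_const (by fun_prop) (Or.inr ht.le))
    have h' := h.tendsto
    simp only [zero_div, add_zero, Real.one_rpow, mul_one] at h'
    exact nhdsWithin_le_nhds (h'.eventually_le_const hmM)
  have hIoc : ∀ {a : ℝ}, 0 < a → ∀ᶠ r : ℝ in 𝓝[>] 0, r ∈ Ioc 0 a := fun ha => Ioc_mem_nhdsGT ha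
  obtain ⟨r, hrM, ⟨hr0, hrε⟩, ⟨-, hr1⟩, -, hrσ⟩ : ∃ r : ℝ, m * (1 + r / σ) ^ t ≤ M ∧
      r ∈ Ioc 0 ε ∧ r ∈ Ioc 0 r₁ ∧ r ∈ Ioc 0 σ :=
    (hlim.and ((hIoc hε).and ((hIoc hr₁).and (hIoc hσ)))).exists
  obtain ⟨τ, hτ, hτ0, hτr⟩ : ∃ τ : ℝ,
      A * (2 * r) ^ s * (C / (b * r ^ δ)) * τ ^ (s - t) ≤ m ∧ τ ∈ Ioc 0 r :=
    ((eventually_mul_rpow_le hst hm).and (hIoc hr0)).exists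
  obtain ⟨n, hnN, hn1, hn2⟩ :=
    ((eventually_ge_atTop N).and ((hup τ hτ0).and (hlow r ⟨hr0, hr1⟩))).exists
  have hbr : 0 < b * r ^ δ := by positivity
  obtain ⟨lam', hprob, hthick, hball, hnull⟩ := exists_redistribution lam (ν n) hbr hn2
  have hlarge : ∀ z ρ, lam'.real (ball z ρ) ≤ lam.real (ball z (r + ρ)) := fun z ρ =>
    ENNReal.toReal_mono (measure_ne_top _ _)
      ((hthick _ measurableSet_ball).trans (measure_mono (thickening_ball z r ρ)))
  refine ⟨n, hnN, lam', hprob, hnull _ (hE n).compl (hsupp n), ⟨C / (b * r ^ δ), by positivity, ?_⟩,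
    ?_, fun S hS => (hthick S hS).trans (measure_mono (thickening_mono hrε S))⟩
  · intro z ρ hρ
    calc _ ≤ _ := hball z ρ
      _ ≤ 1 * (C * ρ ^ s / (b * r ^ δ)) := by
        gcongr
        · exact measureReal_le_one
        · exact hν n z ρ hρ
      _ = _ := by ring
  · intro z ρ hρ
    have hMt : m * ρ ^ t ≤ M * ρ ^ t := by gcongr
    rcases le_or_gt σ ρ with h1 | h1
    · calc _ ≤ _ := hlarge z ρ
        _ ≤ m * (r + ρ) ^ t := hlamm z _ (by positivity)
        _ ≤ m * ((1 + r / σ) * ρ) ^ t := by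
          gcongr
          have : r / σ * σ ≤ r / σ * ρ := by gcongr
          rw [div_mul_cancel₀ _ hσ.ne'] at this
          linarith
        _ = m * (1 + r / σ) ^ t * ρ ^ t := by
          rw [Real.mul_rpow (by positivity) hρ.le]; ring
        _ ≤ _ := by gcongr
    refine le_trans ?_ hMt
    rcases le_or_gt r ρ with h2 | h2
    · calc _ ≤ _ := hlarge z ρ
        _ ≤ A * (r + ρ) ^ s := hlamA z _ (by positivity)
        _ ≤ A * (2 * ρ) ^ s := by gcongr; linarith
        _ = A * 2 ^ s * ρ ^ s := by rw [Real.mul_rpow (by norm_num) hρ.le]; ring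
        _ ≤ _ := mul_rpow_le_mul_rpow_of_le (by positivity) hρ h1.le hts.le hσ1
    have hsmall : lam'.real (ball z ρ) ≤
        A * (2 * r) ^ s * ((ν n).real (ball z ρ) / (b * r ^ δ)) := by
      refine (hball z ρ).trans ?_
      gcongr
      refine (hlamA z _ (by positivity)).trans ?_
      gcongr
      linarith
    rcases le_or_gt τ ρ with h3 | h3
    · calc _ ≤ _ := hsmall
        _ ≤ A * (2 * r) ^ s * (K * ρ ^ δ / (b * r ^ δ)) := by
          gcongr
          exact hn1 z ρ ⟨h3, h2.le.trans hr1⟩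
        _ = A * 2 ^ s * K / b * (r ^ s * ρ ^ δ / r ^ δ) := by
          rw [Real.mul_rpow (by norm_num) hr0.le]; field_simp
        _ ≤ A * 2 ^ s * K / b * ρ ^ s := by
          gcongr
          rw [div_le_iff₀ (by positivity)]
          have e1 : ρ ^ δ = ρ ^ s * ρ ^ (δ - s) := by rw [← Real.rpow_add hρ]; congr 1; ring
          have e2 : r ^ δ = r ^ s * r ^ (δ - s) := by rw [← Real.rpow_add hr0]; congr 1; ring
          have e3 : ρ ^ (δ - s) ≤ r ^ (δ - s) := by gcongr
          rw [e1, e2]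
          calc _ = ρ ^ s * r ^ s * ρ ^ (δ - s) := by ring
            _ ≤ ρ ^ s * r ^ s * r ^ (δ - s) := by gcongr
            _ = _ := by ring
        _ ≤ _ := mul_rpow_le_mul_rpow_of_le (by positivity) hρ h1.le hts.le hσ2
    · calc _ ≤ _ := hsmall
        _ ≤ A * (2 * r) ^ s * (C * ρ ^ s / (b * r ^ δ)) := by
          gcongr
          exact hν n z ρ hρ
        _ = A * (2 * r) ^ s * (C / (b * r ^ δ)) * ρ ^ s := by ring
        _ ≤ _ := mul_rpow_le_mul_rpow_of_le (by positivity) hρ h3.le hts.le hτ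

lemma isClosed_setOf_measure_le {X : Type*} [MetricSpace X] [MeasurableSpace X] [BorelSpace X]
    {U : Set X} (hU : IsOpen U) (c : ℝ≥0∞) :
    IsClosed {lam : ProbabilityMeasure X | (lam : Measure X) U ≤ c} := by
  rw [← isOpen_compl_iff, isOpen_iff_mem_nhds]
  intro lam hlam
  have hlt : c < (lam : Measure X) U := not_le.1 fun hle => hlam hle
  have h1 := ProbabilityMeasure.le_liminf_measure_open_of_tendsto
    (tendsto_id (α := ProbabilityMeasure X) (x := 𝓝 lam)) hU
  filter_upwards [eventually_lt_of_lt_liminf (hlt.trans_le h1)] with κ hκ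
  exact fun hle => not_le.2 hκ hle

/-- A Baire category argument in the space of probability measures: if measures in `T` can be moved
by arbitrarily little, within `T`, to a measure carried by some `E n` with `n` large, then the
closure of `T` contains a measure carried by the limsup of the `E n`. -/
lemma exists_mem_closure_measure_limsup_eq_one {X : Type*} [MetricSpace X] [CompactSpace X]
    [MeasurableSpace X] [BorelSpace X] {E : ℕ → Set X} (hE : ∀ n, IsOpen (E n))
    {T : Set (ProbabilityMeasure X)} (hT : T.Nonempty)
    (h : ∀ lam ∈ T, ∀ ε : ℝ, 0 < ε → ∀ N : ℕ, ∃ n ≥ N, ∃ lam' ∈ T, (lam' : Measure X) (E n)ᶜ = 0 ∧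
      ∀ S, MeasurableSet S → (lam' : Measure X) S ≤ (lam : Measure X) (thickening ε S)) :
    ∃ lam ∈ closure T, (lam : Measure X) (limsup E atTop) = 1 := by
  set U : ℕ → Set X := fun N => ⋃ n ≥ N, E n with hU
  have hUopen : ∀ N, IsOpen (U N) := fun N => isOpen_biUnion fun n _ => hE n
  set G : ℕ × ℕ → Set (ProbabilityMeasure X) := fun p =>
    {lam | 1 - ((p.2 : ℝ≥0∞) + 1)⁻¹ < (lam : Measure X) (U p.1)} with hG
  have hGopen : ∀ p, IsOpen (G p) := fun p => by
    convert! (isClosed_setOf_measure_le (hUopen p.1) (1 - ((p.2 : ℝ≥0∞) + 1)⁻¹)).isOpen_compl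
    ext lam
    simp [hG]
  have hdense : ∀ p, T ⊆ closure (T ∩ G p) := by
    intro p lam hlam
    choose n hn lam' hT' hnull hthick using
      fun k : ℕ => h lam hlam (1 / ((k : ℝ) + 1)) (by positivity) p.1
    have hconv : Tendsto lam' atTop (𝓝 lam) := by
      refine tendsto_of_forall_isClosed_limsup_le' fun F hF => ?_
      have hlim : Tendsto (fun k : ℕ => (lam : Measure X) (cthickening (1 / ((k : ℝ) + 1)) F)) atTop
          (𝓝 ((lam : Measure X) F)) :=
        (tendsto_measure_cthickening_of_isClosed ⟨1, one_pos, measure_ne_top _ _⟩ hF).comp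
          tendsto_one_div_add_atTop_nhds_zero_nat
      rw [← hlim.limsup_eq]
      exact limsup_le_limsup (Eventually.of_forall fun k =>
        (hthick k F hF.measurableSet).trans (measure_mono (thickening_subset_cthickening _ _)))
    refine mem_closure_of_tendsto hconv (Eventually.of_forall fun k => ⟨hT' k, ?_⟩)
    have h1 : (lam' k : Measure X) (U p.1) = 1 := by
      rw [← prob_compl_eq_zero_iff (hUopen _).measurableSet]
      exact measure_mono_null
        (compl_subset_compl.2 (subset_biUnion_of_mem (u := E) (hn k))) (hnull k)
    rw [hG, mem_ofPred_eq, h1]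
    exact ENNReal.sub_lt_self ENNReal.one_ne_top one_ne_zero (by simp)
  have hcpt : CompactSpace (closure T) := isCompact_iff_compactSpace.1 isClosed_closure.isCompact
  have hne : Nonempty (closure T) := hT.closure.to_subtype
  have hbaire : Dense (⋂ p, ((↑) : closure T → ProbabilityMeasure X) ⁻¹' G p) := by
    refine dense_iInter_of_isOpen (fun p => (hGopen p).preimage continuous_subtype_val) fun p => ?_
    rw [Subtype.dense_iff]
    refine closure_minimal ((hdense p).trans (closure_mono ?_)) isClosed_closure
    rintro lam ⟨h1, h2⟩
    exact ⟨⟨lam, subset_closure h1⟩, h2, rfl⟩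
  obtain ⟨⟨lam, hlam⟩, hmem⟩ := hbaire.nonempty
  refine ⟨lam, hlam, ?_⟩
  have hUone : ∀ N, (lam : Measure X) (U N) = 1 := by
    intro N
    refine le_antisymm prob_le_one (le_of_tendsto' (x := atTop)
      (f := fun j : ℕ => 1 - ((j : ℝ≥0∞) + 1)⁻¹) ?_
      fun j => (mem_iInter.1 hmem (N, j)).le)
    have h1 : Tendsto (fun j : ℕ => ((j : ℝ≥0∞) + 1)⁻¹) atTop (𝓝 0) := by
      have := (tendsto_add_atTop_iff_nat 1).2 ENNReal.tendsto_inv_nat_nhds_zero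
      simpa using this
    simpa using ENNReal.Tendsto.sub (tendsto_const_nhds (x := (1 : ℝ≥0∞))) h1
      (Or.inl ENNReal.one_ne_top)
  have hlimsup : limsup E atTop = ⋂ N, U N := by
    rw [limsup_eq_iInf_iSup_of_nat]; rfl
  rw [hlimsup, ← prob_compl_eq_zero_iff (MeasurableSet.iInter fun N => (hUopen N).measurableSet),
    compl_iInter, measure_iUnion_null_iff]
  exact fun N => (prob_compl_eq_zero_iff (hUopen N).measurableSet).2 (hUone N)

lemma HasBallBound.measure_ball_le {X : Type*} [MetricSpace X] [MeasurableSpace X] {ν : Measure X}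
    [IsFiniteMeasure ν] {A s : ℝ} (h : HasBallBound ν A s) (x : X) {r : ℝ} (hr : 0 < r) :
    ν (ball x r) ≤ ENNReal.ofReal (A * r ^ s) := by
  rw [← ofReal_measureReal]
  exact ENNReal.ofReal_le_ofReal (h x r hr)

/-- A lower bound for the Hausdorff dimension of a limsup of open sets
carrying suitably comparable probability measures on a compact Ahlfors regular space. -/
theorem statement12 {X : Type*} [MetricSpace X] [CompactSpace X]
    [MeasurableSpace X] [BorelSpace X]
    (μ : Measure X) (δ₀ : ℝ)
    (hreg : ∃ c₁ c₂ r₀ : ℝ, 0 < c₁ ∧ c₁ ≤ 1 ∧ 1 ≤ c₂ ∧ 0 < r₀ ∧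
      ∀ (x : X) (r : ℝ), 0 < r → r ≤ r₀ →
        ENNReal.ofReal (c₁ * r ^ δ₀) ≤ μ (ball x r) ∧
          μ (ball x r) ≤ ENNReal.ofReal (c₂ * r ^ δ₀))
    (E : ℕ → Set X) (hEopen : ∀ n, IsOpen (E n))
    (μn : ℕ → Measure X) (hprob : ∀ n, IsProbabilityMeasure (μn n))
    (hsupp : ∀ n, μn n (univ \ E n) = 0)
    (C s : ℝ) (hC : 1 ≤ C) (hs : 0 ≤ s)
    (hcomp : ∀ (x : X) (r : ℝ), 0 < r →
      (ENNReal.ofReal C)⁻¹ ≤ atTop.liminf (fun n => μn n (ball x r) / μ (ball x r)) ∧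
        atTop.limsup (fun n => μn n (ball x r) / μ (ball x r)) ≤ ENNReal.ofReal C)
    (hholder : ∀ (n : ℕ) (x : X) (r : ℝ), 0 < r →
      μn n (ball x r) ≤ ENNReal.ofReal (C * r ^ s)) :
    ENNReal.ofReal s ≤ dimH (atTop.limsup E) := by
  obtain ⟨c₁, c₂, r₀, hc₁, -, hc₂, hr₀, hreg⟩ := hreg
  have hC0 : 0 < C := by linarith
  have hν : ∀ n, HasBallBound (μn n) C s := fun n x r hr =>
    ENNReal.toReal_le_of_le_ofReal (by positivity) (hholder n x r hr)
  have hfin : ∀ x r, 0 < r → r ≤ r₀ → μ (ball x r) ≠ ∞ := fun x r h0 h1 =>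
    ne_top_of_le_ne_top ENNReal.ofReal_ne_top (hreg x r h0 h1).2
  have hpos : ∀ x r, 0 < r → r ≤ r₀ → μ (ball x r) ≠ 0 := fun x r h0 h1 => by
    have h2 : 0 < ENNReal.ofReal (c₁ * r ^ δ₀) := ENNReal.ofReal_pos.2 (by positivity)
    exact (h2.trans_le (hreg x r h0 h1).1).ne'
  have hup : ∀ x r, 0 < r → r ≤ r₀ →
      ∀ᶠ n in atTop, (μn n).real (ball x r) ≤ 2 * C * c₂ * r ^ δ₀ := by
    intro x r h0 h1
    have hlt : ENNReal.ofReal C < ENNReal.ofReal (2 * C) :=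
      (ENNReal.ofReal_lt_ofReal_iff (by linarith)).2 (by linarith)
    filter_upwards [eventually_lt_of_limsup_lt ((hcomp x r h0).2.trans_lt hlt)] with n hn
    refine ENNReal.toReal_le_of_le_ofReal (by positivity) ?_
    rw [ENNReal.div_lt_iff (Or.inl (hpos x r h0 h1)) (Or.inl (hfin x r h0 h1))] at hn
    refine hn.le.trans ((mul_le_mul_right (hreg x r h0 h1).2 _).trans_eq ?_)
    rw [← ENNReal.ofReal_mul (by positivity)]
    ring_nf
  have hlow : ∀ x r, 0 < r → r ≤ r₀ →
      ∀ᶠ n in atTop, c₁ / (2 * C) * r ^ δ₀ ≤ (μn n).real (ball x r) := by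
    intro x r h0 h1
    have hlt : ENNReal.ofReal (2 * C)⁻¹ < (ENNReal.ofReal C)⁻¹ := by
      rw [← ENNReal.ofReal_inv_of_pos hC0]
      refine (ENNReal.ofReal_lt_ofReal_iff (by positivity)).2 ?_
      gcongr
      linarith
    filter_upwards [eventually_lt_of_lt_liminf (hlt.trans_le (hcomp x r h0).1)] with n hn
    rw [ENNReal.lt_div_iff_mul_lt (Or.inl (hpos x r h0 h1)) (Or.inl (hfin x r h0 h1))] at hn
    refine (ENNReal.ofReal_le_iff_le_toReal (measure_ne_top _ _)).1 (le_trans ?_ hn.le)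
    refine le_trans (le_of_eq ?_) (mul_le_mul_right (hreg x r h0 h1).1 _)
    rw [← ENNReal.ofReal_mul (by positivity)]
    ring_nf
  obtain ⟨x₀⟩ : Nonempty X := nonempty_of_isProbabilityMeasure (μn 0)
  have hsδ : s ≤ δ₀ := by
    by_contra! hlt
    obtain ⟨r, hr, hr0, hr1⟩ : ∃ r : ℝ, C * r ^ (s - δ₀) ≤ c₁ / (4 * C) ∧ r ∈ Ioc 0 r₀ :=
      ((eventually_mul_rpow_le (sub_pos.2 hlt) (by positivity)).and (Ioc_mem_nhdsGT hr₀)).exists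
    obtain ⟨n, hn⟩ := (hlow x₀ r hr0 hr1).exists
    have h1 := hn.trans (hν n x₀ r hr0)
    have h2 := mul_rpow_le_mul_rpow_of_le hC0.le hr0 le_rfl hlt.le hr
    have h3 : c₁ / (4 * C) * r ^ δ₀ < c₁ / (2 * C) * r ^ δ₀ := by
      gcongr
      norm_num
    linarith
  refine le_of_forall_lt fun c hc => ?_
  obtain ⟨t', hct, hts'⟩ := exists_between hc
  set t := t'.toReal with ht'
  have ht'fin : t' ≠ ∞ := ne_top_of_lt hts'
  have htpos : 0 < t := ENNReal.toReal_pos (pos_of_gt hct).ne' ht'fin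
  have hts : t < s := by rwa [← ENNReal.lt_ofReal_iff_toReal_lt ht'fin]
  refine hct.trans_le ?_
  rw [← ENNReal.ofReal_toReal ht'fin, ← ht']
  set T : Set (ProbabilityMeasure X) := {lam | (∃ A, 0 ≤ A ∧ HasBallBound (lam : Measure X) A s) ∧
    ∃ m, 0 < m ∧ m < 2 * C ∧ HasBallBound (lam : Measure X) m t} with hT
  have hTne : T.Nonempty := by
    refine ⟨⟨μn 0, hprob 0⟩, ⟨C, hC0.le, hν 0⟩, C, hC0, by linarith, fun x r hr => ?_⟩
    rcases le_total r 1 with h1 | h1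
    · refine (hν 0 x r hr).trans ?_
      exact mul_le_mul_of_nonneg_left (Real.rpow_le_rpow_of_exponent_ge hr h1 hts.le) hC0.le
    · exact (measureReal_le_one (μ := μn 0)).trans
        (one_le_mul_of_one_le_of_one_le hC (Real.one_le_rpow h1 htpos.le))
  obtain ⟨lam, hlam, hone⟩ := exists_mem_closure_measure_limsup_eq_one hEopen hTne (by
    rintro lam ⟨⟨A, hA, hlamA⟩, m, hm, hmM, hlamm⟩ ε hε N
    obtain ⟨n, hn, lam', hp, hnull, hA', hM', hthick⟩ :=
      exists_approx_supported (fun n => (hEopen n).measurableSet)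
        (fun n => by rw [compl_eq_univ_sdiff]; exact hsupp n) htpos hts hsδ hC0.le
        (K := 2 * C * c₂ * 4 ^ δ₀) (b := c₁ / (2 * C) * (1 / 2) ^ δ₀) (r₁ := r₀ / 2)
        (by positivity) (by positivity) (by linarith) hν
        (fun a ha => eventually_forall_measureReal_ball_le (hs.trans hsδ) (by positivity) hup ha
          (by linarith))
        (fun r hr => eventually_forall_le_measureReal_ball hr.1 fun x => by
          filter_upwards [hlow x (r / 2) (half_pos hr.1) (by linarith [hr.1, hr.2])] with n hn
          refine le_trans (le_of_eq ?_) hn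
          rw [mul_assoc, ← Real.mul_rpow (by norm_num) hr.1.le]
          ring_nf)
        hA hm (show m < (m + 2 * C) / 2 by linarith) hlamA hlamm hε N
    exact ⟨n, hn, ⟨lam', hp⟩, ⟨hA', _, by positivity, by linarith, hM'⟩, hnull, hthick⟩)
  refine ofReal_le_dimH_of_measure_ball_le (lam : Measure X) (M := 2 * C) (by linarith) htpos ?_
    (S := limsup E atTop) (by simp [hone])
  intro x r hr
  refine closure_minimal ?_ (isClosed_setOf_measure_le isOpen_ball _) hlam
  rintro κ ⟨-, m, hm, hmM, hκ⟩
  refine (hκ.measure_ball_le x hr).trans (ENNReal.ofReal_le_ofReal ?_)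
  gcongr
end

section
/- Fix d ≥ 1 and δ = (δ₁,...,δ_d) ∈ (ℝ⁺)^d. Suppose u, v ∈ (ℝ⁺)^d satisfy u_i ≤ v_i for every 1 ≤ i ≤ d, and let 𝒜 := {u_i, v_i : 1 ≤ i ≤ d}. Then min_{a∈𝒜} 𝔰(u,v,a) = min_{1≤i≤d} s(u,v,i). -/
open Filter Set

noncomputable section

/-- The quantity `𝔰(u,v,a)`. -/
def sFrak {d : ℕ} (δ u v : Fin d → ℝ) (a : ℝ) : ℝ :=
  (∑ k ∈ Finset.univ.filter (fun k => a < u k), δ k)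
    + (∑ k ∈ Finset.univ.filter (fun k => v k ≤ a), δ k * (1 - (v k - u k) / a))
    + ∑ k ∈ Finset.univ.filter (fun k => ¬(a < u k) ∧ ¬(v k ≤ a)), δ k * u k / a

/-- The function `a ↦ a * 𝔰(u,v,a)`, extended piecewise linearly to `a = 0`. -/
def scaledS {d : ℕ} (δ u v : Fin d → ℝ) (a : ℝ) : ℝ :=
  ∑ k, δ k * (min a (u k) + max 0 (a - v k))

lemma sFrak_mul_self {d : ℕ} (δ u v : Fin d → ℝ) (huv : ∀ i, u i ≤ v i) {a : ℝ} (ha : 0 < a) :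
    sFrak δ u v a * a = scaledS δ u v a := by
  unfold sFrak scaledS
  rw [Finset.sum_filter, Finset.sum_filter, Finset.sum_filter, ← Finset.sum_add_distrib,
    ← Finset.sum_add_distrib, Finset.sum_mul]
  refine Finset.sum_congr rfl fun k _ => ?_
  have hk := huv k
  by_cases hau : a < u k
  · have hva : ¬ v k ≤ a := by linarith
    rw [min_eq_left hau.le, max_eq_left (by linarith)]
    simp [hau, hva]
  · rw [min_eq_right (not_lt.mp hau)]
    by_cases hva : v k ≤ a
    · rw [max_eq_right (by linarith)]
      simp only [hau, hva, if_true, if_false, not_true, and_false]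
      field_simp
      ring
    · rw [max_eq_left (by linarith)]
      simp only [hau, hva, if_true, if_false, not_false_iff, and_self]
      field_simp
      ring

/-- `scaledS` is concave on intervals whose interior contains no `v k`. -/
lemma scaledS_concave {d : ℕ} (δ u v : Fin d → ℝ) (hδ : ∀ i, 0 < δ i) {p a q : ℝ}
    (hpa : p ≤ a) (haq : a ≤ q) (hgap : ∀ k, v k ≤ p ∨ q ≤ v k) :
    (q - a) * scaledS δ u v p + (a - p) * scaledS δ u v q ≤ (q - p) * scaledS δ u v a := by
  unfold scaledS
  rw [Finset.mul_sum, Finset.mul_sum, Finset.mul_sum, ← Finset.sum_add_distrib]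
  refine Finset.sum_le_sum fun k _ => ?_
  have hqa : 0 ≤ q - a := sub_nonneg.mpr haq
  have hap : 0 ≤ a - p := sub_nonneg.mpr hpa
  have hmin : (q - a) * min p (u k) + (a - p) * min q (u k) ≤ (q - p) * min a (u k) := by
    rcases min_choice a (u k) with h | h <;> rw [h]
    · nlinarith [mul_le_mul_of_nonneg_left (min_le_left p (u k)) hqa,
        mul_le_mul_of_nonneg_left (min_le_left q (u k)) hap]
    · nlinarith [mul_le_mul_of_nonneg_left (min_le_right p (u k)) hqa,
        mul_le_mul_of_nonneg_left (min_le_right q (u k)) hap]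
  have hmax : (q - a) * max 0 (p - v k) + (a - p) * max 0 (q - v k)
      = (q - p) * max 0 (a - v k) := by
    rcases hgap k with h | h
    · rw [max_eq_right (by linarith), max_eq_right (by linarith), max_eq_right (by linarith)]
      ring
    · rw [max_eq_left (by linarith), max_eq_left (by linarith), max_eq_left (by linarith)]
      ring
  have := mul_le_mul_of_nonneg_left (add_le_add hmin hmax.le) (hδ k).le
  linarith

/-- A lower bound for `𝔰` at all `v i` is a lower bound on `(0, max v]`. -/
lemma le_sFrak_of_forall_le {d : ℕ} (δ u v : Fin d → ℝ) (hδ : ∀ i, 0 < δ i) (hu : ∀ i, 0 < u i)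
    (hv : ∀ i, 0 < v i) (huv : ∀ i, u i ≤ v i) {a c : ℝ} (ha : 0 < a) {j : Fin d} (haj : a ≤ v j)
    (hc : ∀ i, c ≤ sFrak δ u v (v i)) : c ≤ sFrak δ u v a := by
  have hcv : ∀ i, c * v i ≤ scaledS δ u v (v i) := fun i => by
    rw [← sFrak_mul_self δ u v huv (hv i)]
    exact mul_le_mul_of_nonneg_right (hc i) (hv i).le
  have hzero : scaledS δ u v 0 = 0 := Finset.sum_eq_zero fun k _ => by
    rw [min_eq_left (hu k).le, max_eq_left (by linarith [hv k])]
    ring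
  obtain ⟨m, hm, hmin⟩ := Finset.exists_min_image (Finset.univ.filter fun i => a ≤ v i) v
    ⟨j, by simpa using haj⟩
  obtain ⟨p, hp, hmax⟩ := Finset.exists_max_image
    ((insert 0 (Finset.univ.image v)).filter fun x => x < a) id ⟨0, by simpa using ha⟩
  simp only [Finset.mem_filter, Finset.mem_univ, true_and] at hm hmin
  simp only [Finset.mem_filter, Finset.mem_insert, Finset.mem_image, Finset.mem_univ, true_and,
    id] at hp hmax
  have hgap : ∀ k, v k ≤ p ∨ v m ≤ v k := fun k => by
    rcases lt_or_ge (v k) a with h | h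
    · exact Or.inl (hmax _ ⟨Or.inr ⟨k, rfl⟩, h⟩)
    · exact Or.inr (hmin k h)
  have hcp : c * p ≤ scaledS δ u v p := by
    rcases hp.1 with h | ⟨i, h⟩
    · rw [h, hzero, mul_zero]
    · rw [← h]
      exact hcv i
  have hconc := scaledS_concave δ u v hδ hp.2.le hm hgap
  have hleft := mul_le_mul_of_nonneg_left hcp (sub_nonneg.mpr hm)
  have hright := mul_le_mul_of_nonneg_left (hcv m) (sub_nonneg.mpr hp.2.le)
  rw [← sFrak_mul_self δ u v huv ha] at hconc
  have hpos : 0 < (v m - p) * a := mul_pos (by linarith [hp.2]) ha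
  refine le_of_mul_le_mul_left ?_ hpos
  linarith

/-- `min_{a ∈ 𝒜} 𝔰(u,v,a) = min_{1≤i≤d} s(u,v,i)`, where
`𝒜 = {uᵢ, vᵢ : 1 ≤ i ≤ d}` and `s(u,v,i) = 𝔰(u,v,vᵢ)`. -/
theorem statement13 {d : ℕ} (hd : 1 ≤ d) (δ u v : Fin d → ℝ)
    (hδ : ∀ i, 0 < δ i) (hu : ∀ i, 0 < u i) (hv : ∀ i, 0 < v i)
    (huv : ∀ i, u i ≤ v i) :
    sInf (sFrak δ u v '' (range u ∪ range v)) = ⨅ i, sFrak δ u v (v i) := by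
  have : Nonempty (Fin d) := ⟨⟨0, hd⟩⟩
  have hbdd : BddBelow (range fun i => sFrak δ u v (v i)) := (finite_range _).bddBelow
  refine IsGLB.csInf_eq ⟨?_, fun b hb => ?_⟩ ((range_nonempty u).inl.image _)
  · rintro _ ⟨_, ⟨j, rfl⟩ | ⟨j, rfl⟩, rfl⟩
    · exact le_sFrak_of_forall_le δ u v hδ hu hv huv (hu j) (huv j) fun i => ciInf_le hbdd i
    · exact ciInf_le hbdd j
  · exact le_ciInf fun i => hb ⟨v i, Or.inr ⟨i, rfl⟩, rfl⟩
end
end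

section
/- Let β = (β₁,β₂) ∈ ℝ²∖ℚ² be a vector such that β₂/β₁ is an irrational quadratic algebraic number. Then there exist constants M₀ = M₀(β) > 0 and C = C(β) ∈ (0,1) such that for every M > M₀ and every z ∈ ℤ², one has dist_{ℝ²}(p, L) > M⁻¹ for every p ∈ ℤ²∖{z}, where L := {z + tβ : t ∈ ℝ, |t| ≤ CM} and dist_{ℝ²} is the Euclidean distance in ℝ². -/
open Filter Set

noncomputable section

/-- Euclidean norm on `Fin d → ℝ`. -/
def euclNorm {d : ℕ} (x : Fin d → ℝ) : ℝ := Real.sqrt (∑ i, (x i) ^ 2)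

theorem abs_apply_le_euclNorm {d : ℕ} (x : Fin d → ℝ) (i : Fin d) : |x i| ≤ euclNorm x :=
  Real.abs_le_sqrt (Finset.single_le_sum (f := fun i => x i ^ 2)
    (fun j _ => sq_nonneg (x j)) (Finset.mem_univ i))

theorem Irrational.intCast_add_mul_ne_zero {α : ℝ} (h : Irrational α) {m n : ℤ}
    (hmn : m ≠ 0 ∨ n ≠ 0) : (m : ℝ) + α * n ≠ 0 := by
  rcases eq_or_ne n 0 with rfl | hn
  · simpa using hmn
  · exact ((h.mul_intCast hn).intCast_add m).ne_zero

/-- The binary quadratic form attached to a quadratic irrational `α` takes nonzero integer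
values at nonzero integer points. -/
theorem one_le_abs_mul_abs_of_quadratic {α : ℝ} (hα : Irrational α) {a b c : ℤ} (ha : a ≠ 0)
    (hroot : a * α ^ 2 + b * α + c = 0) {m n : ℤ} (hmn : m ≠ 0 ∨ n ≠ 0) :
    1 ≤ |(n : ℝ) - α * m| * |a * n + (b + a * α) * m| := by
  have hQ : ((n : ℝ) - α * m) * (a * n + (b + a * α) * m) =
      ((a * n ^ 2 + b * n * m + c * m ^ 2 : ℤ) : ℝ) := by
    push_cast
    linear_combination (-(m : ℝ) ^ 2) * hroot
  have h₁ : (n : ℝ) - α * m ≠ 0 := by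
    have := hα.intCast_add_mul_ne_zero (m := n) (n := -m) (by simpa using hmn.symm)
    push_cast at this
    rwa [mul_neg, ← sub_eq_add_neg] at this
  have h₂ : (a : ℝ) * n + (b + a * α) * m ≠ 0 := by
    have := hα.intCast_add_mul_ne_zero (m := a * n + b * m) (n := a * m) (by
      rcases eq_or_ne m 0 with rfl | hm
      · left
        simpa [ha] using hmn
      · exact Or.inr (mul_ne_zero ha hm))
    push_cast at this
    convert this using 1
    ring
  rw [← abs_mul, hQ]
  have h := mul_ne_zero h₁ h₂
  rw [hQ] at h
  exact_mod_cast Int.one_le_abs (Int.cast_ne_zero.mp h)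

/-- If `β₂/β₁` is an irrational quadratic algebraic number, then integer
points other than `z` stay at distance `> M⁻¹` from the segment
`L = {z + tβ : |t| ≤ CM}`. -/
theorem statement18 (β : Fin 2 → ℝ)
    (hβ : ¬ ∀ i, ∃ q : ℚ, β i = (q : ℝ))
    (hirr : Irrational (β 1 / β 0))
    (hquad : ∃ p : Polynomial ℤ, p.degree = 2 ∧ Polynomial.aeval (β 1 / β 0) p = 0) :
    ∃ M₀ > (0:ℝ), ∃ C ∈ Ioo (0:ℝ) 1, ∀ M > M₀, ∀ z : Fin 2 → ℤ, ∀ p : Fin 2 → ℤ, p ≠ z →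
      M⁻¹ < sInf {dd : ℝ | ∃ t : ℝ, |t| ≤ C * M ∧
        dd = euclNorm (fun i => (p i : ℝ) - ((z i : ℝ) + t * β i))} := by
  obtain ⟨P, hdeg, hP⟩ := hquad
  have hnat : P.natDegree = 2 := Polynomial.natDegree_eq_of_degree_eq_some hdeg
  have hβ0 : β 0 ≠ 0 := fun h => hirr.ne_zero (by simp [h])
  obtain ⟨α, hα⟩ : ∃ α, α = β 1 / β 0 := ⟨_, rfl⟩
  rw [← hα] at hirr hP
  have hβ1 : β 1 = α * β 0 := by rw [hα, div_mul_cancel₀ _ hβ0]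
  obtain ⟨a, ha⟩ : ∃ a, a = P.coeff 2 := ⟨_, rfl⟩
  obtain ⟨b, hb⟩ : ∃ b, b = P.coeff 1 := ⟨_, rfl⟩
  obtain ⟨c, hc⟩ : ∃ c, c = P.coeff 0 := ⟨_, rfl⟩
  have ha0 : a ≠ 0 := ha ▸ Polynomial.coeff_ne_zero_of_eq_degree hdeg
  have hroot : a * α ^ 2 + b * α + c = 0 := by
    rw [Polynomial.aeval_eq_sum_range, hnat] at hP
    simp only [Finset.sum_range_succ, Finset.sum_range_zero, zsmul_eq_mul, ← ha, ← hb, ← hc] at hP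
    linear_combination hP
  obtain ⟨A, hA⟩ : ∃ A, A = 1 + |α| := ⟨_, rfl⟩
  obtain ⟨K, hK⟩ : ∃ K, K = |(a : ℝ)| + |b + a * α| := ⟨_, rfl⟩
  obtain ⟨B, hB⟩ : ∃ B, B = |β 0| + |β 1| := ⟨_, rfl⟩
  have hA1 : 1 ≤ A := by rw [hA]; linarith [abs_nonneg α]
  have hK1 : 1 ≤ K := by
    have : (1 : ℝ) ≤ |(a : ℝ)| := by exact_mod_cast Int.one_le_abs ha0
    rw [hK]; linarith [abs_nonneg (b + a * α)]
  have hB0 : 0 ≤ B := by rw [hB]; positivity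
  have hAK : 1 ≤ A * K := one_le_mul_of_one_le_of_one_le hA1 hK1
  have hD : 1 < 8 * (A * K) * (B + 1) := by nlinarith
  refine ⟨16 * (A * K), by linarith, (8 * (A * K) * (B + 1))⁻¹,
    ⟨by positivity, inv_lt_one_of_one_lt₀ hD⟩, fun M hM z p hpz => ?_⟩
  obtain ⟨C, hC⟩ : ∃ C, C = (8 * (A * K) * (B + 1))⁻¹ := ⟨_, rfl⟩
  rw [← hC]
  have hC0 : 0 < C := by rw [hC]; positivity
  have hCD : 8 * (A * K) * (B + 1) * C = 1 := by rw [hC]; exact mul_inv_cancel₀ (by linarith)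
  have hM0 : 0 < M := by linarith
  have hMinv : 0 < M⁻¹ := inv_pos.mpr hM0
  refine lt_of_lt_of_le (by linarith : M⁻¹ < 2 * M⁻¹)
    (le_csInf ⟨_, 0, by rw [abs_zero]; positivity, rfl⟩ ?_)
  rintro _ ⟨t, ht, rfl⟩
  by_contra! hlt
  obtain ⟨m, hm⟩ : ∃ m, m = p 0 - z 0 := ⟨_, rfl⟩
  obtain ⟨n, hn⟩ : ∃ n, n = p 1 - z 1 := ⟨_, rfl⟩
  have hmn : m ≠ 0 ∨ n ≠ 0 := by
    by_contra! h
    refine hpz (funext fun i => ?_)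
    fin_cases i
    · exact sub_eq_zero.mp (hm ▸ h.1)
    · exact sub_eq_zero.mp (hn ▸ h.2)
  have he0 : |(m : ℝ) - t * β 0| ≤ 2 * M⁻¹ := by
    refine le_trans (le_of_eq ?_) ((abs_apply_le_euclNorm _ 0).trans hlt.le)
    rw [hm]; push_cast; congr 1; ring
  have he1 : |(n : ℝ) - t * β 1| ≤ 2 * M⁻¹ := by
    refine le_trans (le_of_eq ?_) ((abs_apply_le_euclNorm _ 1).trans hlt.le)
    rw [hn]; push_cast; congr 1; ring
  have hlin : |(n : ℝ) - α * m| ≤ A * (2 * M⁻¹) := by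
    calc |(n : ℝ) - α * m| = |(n - t * β 1) - α * (m - t * β 0)| := by
          rw [hβ1]; congr 1; ring
      _ ≤ |(n : ℝ) - t * β 1| + |α| * |m - t * β 0| := by
          rw [← abs_mul]; exact abs_sub _ _
      _ ≤ 2 * M⁻¹ + |α| * (2 * M⁻¹) := by gcongr
      _ = A * (2 * M⁻¹) := by rw [hA]; ring
  have hcoord (k : ℤ) (x : ℝ) (hx : |x| ≤ B) (hk : |(k : ℝ) - t * x| ≤ 2 * M⁻¹) :
      |(k : ℝ)| ≤ C * M * B + 2 * M⁻¹ := by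
    calc |(k : ℝ)| = |t * x + (k - t * x)| := by congr 1; ring
      _ ≤ |t| * |x| + |k - t * x| := by rw [← abs_mul]; exact abs_add_le _ _
      _ ≤ C * M * B + 2 * M⁻¹ := by gcongr
  have hm' := hcoord m (β 0) (by rw [hB]; linarith [abs_nonneg (β 1)]) he0
  have hn' := hcoord n (β 1) (by rw [hB]; linarith [abs_nonneg (β 0)]) he1
  have hconj : |a * n + (b + a * α) * m| ≤ K * (C * M * B + 2 * M⁻¹) := by
    calc |a * n + (b + a * α) * m| ≤ |(a : ℝ)| * |(n : ℝ)| + |b + a * α| * |(m : ℝ)| := by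
          rw [← abs_mul, ← abs_mul]; exact abs_add_le _ _
      _ ≤ |(a : ℝ)| * (C * M * B + 2 * M⁻¹) + |b + a * α| * (C * M * B + 2 * M⁻¹) := by gcongr
      _ = K * (C * M * B + 2 * M⁻¹) := by rw [hK]; ring
  have hmain : 1 ≤ (A * (2 * M⁻¹)) * (K * (C * M * B + 2 * M⁻¹)) :=
    (one_le_abs_mul_abs_of_quadratic hirr ha0 hroot hmn).trans
      (mul_le_mul hlin hconj (abs_nonneg _) (by positivity))
  have hexp : (A * (2 * M⁻¹)) * (K * (C * M * B + 2 * M⁻¹)) =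
      2 * (A * K * B * C) + 4 * (A * K * M⁻¹) * M⁻¹ := by
    field_simp
    ring
  have hmain_le : 8 * (A * K * B * C) ≤ 1 := by
    have : 0 < A * K * C := by positivity
    linarith
  have hAKM : A * K * M⁻¹ < 1 / 16 := by
    rw [← div_eq_mul_inv, div_lt_iff₀ hM0]; linarith
  have hM1 : M⁻¹ ≤ 1 := inv_le_one_of_one_le₀ (by linarith)
  have : A * K * M⁻¹ * M⁻¹ ≤ 1 / 16 * 1 := by gcongr
  linarith
end
end
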